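/- Let N ≥ 2, let B ⊂ ℝ^N be a bounded radial domain, let 𝓑 ⊂ ℝ × ℝ^N × ℝ^{N×N} be open convex with (0,0,0) ∈ 𝓑, and let F : [0,∞) × B̄ × 𝓑 → ℝ satisfy (F1) reflection invariance (B × 𝓑 invariant under (x,u,p,q) ↦ (Rx,u,Rp,RqR) for every hyperplane reflection R and F(t,Rx,u,Rp,RqR) = F(t,x,u,p,q)), (F2) continuity, uniform Lipschitz continuity in (u,p,q), and differentiability in q, (F3) boundedness of F(·,·,0,0,0), and (F4) uniform ellipticity with constant α₀ > 0. Let u ∈ C^{2,1}(B × (0,∞)) ∩ C(B̄ × [0,∞)) be a classical solution of u_t = F(t,x,u,∇u,D²u) in B × (0,∞), u = 0 on ∂B × (0,∞), u(·,0) = u₀, with sup_{t≥0} ‖u(·,t)‖_{L^∞(B)} < ∞. Define 𝓜 = {e ∈ S : z(x) ≥ z(σ_e(x)) for all x ∈ B(e) and all z ∈ ω(u)}. If e ∈ S satisfies u₀(x) ≥ u₀(σ_e(x)) for all x ∈ B(e) and u₀ ∘ σ_e ≢ u₀ on B(e), then there is ε > 0 such that e' ∈ 𝓜 for all e' ∈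 S with |e' − e| < ε. -/

import Mathlib

/-!
For a unit vector `e` put `w_e = u - u ∘ σ_e`. Reflection invariance of `F`, convexity of `𝓑` and
the mean value theorem show that `w_e` is a supersolution for the class of all linear parabolic
operators with ellipticity constant `α₀` and coefficients bounded by `L`. It can therefore be
compared with functions that are subsolutions for the whole class at once; the coefficients
themselves never appear.

*The given direction.* Since `w_e` vanishes on `∂B` and on `H(e)`, comparison with `0` gives
`w_e ≥ 0`. Positivity at one point at time `0` spreads through the connected set `B(e)` by means of
bumps moving at constant speed, so `w_e(·, 1) > 0` on `B(e)`.

*Nearby directions.* By compactness, for `e'` close to `e` the function `w_{e'}(·, 1)` is bounded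
below by a fixed `η > 0` away from the boundary of `B(e')` and by `-ε` everywhere. Let `Θ` be a
radial defining function of `B` and `g(x) = (x·e') Θ(x)`. The profile
`Ψ = Λ ((g - s)₊)^(k+3) + ((1 - x·e'/δ)₊)³ + ((1 - Θ/δ)₊)³ - 3` makes `ε e^{-κ(t-1)} Ψ` a
subsolution, with constants independent of `e'`: in the layers along `H(e')` and `∂B` the large
second derivative of the cubes dominates, and elsewhere the first term does, its power being so
large that `|∇g|² ≥ c g - K g²` absorbs the lower-order terms. This includes the edge
`∂B ∩ H(e')`, where `∇g` vanishes. Comparison from time `1` on gives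
`w_{e'} ≥ -3 ε e^{-κ(t-1)}`, whence `z ≥ z ∘ σ_{e'}` on `B(e')` for every `z ∈ ω(u)`.
-/

open Set Metric Filter
open scoped RealInnerProductSpace

noncomputable section

variable {N : ℕ}

/-- Reflection through the hyperplane `H(e) = {x : ⟪x,e⟫ = 0}`:
`σ_e(x) = x - 2 (x·e) e`. -/
def reflHyp (e x : EuclideanSpace ℝ (Fin N)) : EuclideanSpace ℝ (Fin N) :=
  x - (2 * ⟪x, e⟫) • e

/-- The half domain `B(e) = {x ∈ B : x·e > 0}`. -/
def halfDom (B : Set (EuclideanSpace ℝ (Fin N))) (e : EuclideanSpace ℝ (Fin N)) :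
    Set (EuclideanSpace ℝ (Fin N)) := {x ∈ B | 0 < ⟪x, e⟫}

/-- A (bounded) radial domain: an open ball or an open annulus centered at the origin. -/
def IsRadialDomain (B : Set (EuclideanSpace ℝ (Fin N))) : Prop :=
  (∃ R, 0 < R ∧ B = Metric.ball 0 R) ∨
  (∃ r R, 0 < r ∧ r < R ∧ B = {x : EuclideanSpace ℝ (Fin N) | r < ‖x‖ ∧ ‖x‖ < R})

/-- `u` is foliated Schwarz symmetric on `D` with respect to the unit vector `p`:
`u(x) ≥ u(y)` whenever `|x| = |y|` and `x·p ≥ y·p`.  (This is equivalent to axial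
symmetry with respect to `ℝp` together with monotonicity in the polar angle.) -/
def FoliatedSchwarzOn (D : Set (EuclideanSpace ℝ (Fin N)))
    (u : EuclideanSpace ℝ (Fin N) → ℝ) (p : EuclideanSpace ℝ (Fin N)) : Prop :=
  ∀ x ∈ D, ∀ y ∈ D, ‖x‖ = ‖y‖ → ⟪y, p⟫ ≤ ⟪x, p⟫ → u y ≤ u x

/-- The omega limit set of a (bounded) solution `u = u(x,t)`: all continuous
functions `z` on `B̄` which are uniform limits on `B̄` of `u(·, tₙ)` for some
sequence `tₙ → ∞`. -/
def omegaLimitSet (B : Set (EuclideanSpace ℝ (Fin N)))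
    (u : EuclideanSpace ℝ (Fin N) → ℝ → ℝ) : Set (EuclideanSpace ℝ (Fin N) → ℝ) :=
  {z | ContinuousOn z (closure B) ∧ ∃ t : ℕ → ℝ, Tendsto t atTop atTop ∧
    ∀ ε > 0, ∃ n₀ : ℕ, ∀ n ≥ n₀, ∀ x ∈ closure B, |u x (t n) - z x| ≤ ε}

/-- The matrix of the reflection through the hyperplane orthogonal to `e`:
`R_{ij} = δ_{ij} − 2 eᵢ eⱼ`. -/
def reflMat (e : EuclideanSpace ℝ (Fin N)) : Fin N → Fin N → ℝ :=
  fun i j => (if i = j then (1:ℝ) else 0) - 2 * e i * e j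

/-- The conjugation `R q R` of a matrix `q` by a (symmetric) matrix `R`. -/
def matConj (R q : Fin N → Fin N → ℝ) : Fin N → Fin N → ℝ :=
  fun i j => ∑ k, ∑ l, R i k * q k l * R l j

/-- The gradient vector `∇u ∈ ℝᴺ` associated with a differential `Du`. -/
def gradVec (Du : EuclideanSpace ℝ (Fin N) →L[ℝ] ℝ) : EuclideanSpace ℝ (Fin N) :=
  (EuclideanSpace.equiv (Fin N) ℝ).symm (fun i => Du (EuclideanSpace.single i 1))

/-- The Hessian matrix `D²u = (u_{xᵢxⱼ})` associated with a second differential. -/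
def hessMat (D2 : EuclideanSpace ℝ (Fin N) →L[ℝ] EuclideanSpace ℝ (Fin N) →L[ℝ] ℝ) :
    Fin N → Fin N → ℝ :=
  fun i j => D2 (EuclideanSpace.single i 1) (EuclideanSpace.single j 1)

/-- The set `𝓜 = {e ∈ S : z ≥ z ∘ σ_e on B(e) for all z ∈ ω(u)}`. -/
def omegaReflSet (B : Set (EuclideanSpace ℝ (Fin N)))
    (u : EuclideanSpace ℝ (Fin N) → ℝ → ℝ) : Set (EuclideanSpace ℝ (Fin N)) :=
  {e | ‖e‖ = 1 ∧ ∀ z ∈ omegaLimitSet B u, ∀ x ∈ halfDom B e, z (reflHyp e x) ≤ z x}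

open scoped Topology NNReal

set_option maxSynthPendingDepth 3

section TwoJets

variable {E E' : Type*} [NormedAddCommGroup E] [NormedSpace ℝ E] [NormedAddCommGroup E']
  [NormedSpace ℝ E'] {f g : E → ℝ} {p q : E →L[ℝ] ℝ} {H K : E →L[ℝ] E →L[ℝ] ℝ} {x : E}

/-- `f` is twice differentiable at `x`, with first derivative `p` and second derivative `H`. -/
def HasTwoJetAt (f : E → ℝ) (p : E →L[ℝ] ℝ) (H : E →L[ℝ] E →L[ℝ] ℝ) (x : E) : Prop :=
  ∃ f' : E → E →L[ℝ] ℝ, (∀ᶠ y in 𝓝 x, HasFDerivAt f (f' y) y) ∧ f' x = p ∧ HasFDerivAt f' H x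

namespace HasTwoJetAt

lemma hasFDerivAt (hf : HasTwoJetAt f p H x) : HasFDerivAt f p x := by
  obtain ⟨f', hf', rfl, -⟩ := hf
  exact hf'.self_of_nhds

lemma symmetric (hf : HasTwoJetAt f p H x) (a b : E) : H a b = H b a := by
  obtain ⟨f', hf', -, hH⟩ := hf
  exact second_derivative_symmetric_of_eventually hf' hH a b

lemma const (c : ℝ) (x : E) : HasTwoJetAt (fun _ => c) 0 0 x :=
  ⟨fun _ => 0, .of_forall fun y => hasFDerivAt_const c y, rfl, hasFDerivAt_const _ _⟩

lemma clm (p : E →L[ℝ] ℝ) (x : E) : HasTwoJetAt p p 0 x :=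
  ⟨fun _ => p, .of_forall fun _ => p.hasFDerivAt, rfl, hasFDerivAt_const _ _⟩

lemma add (hf : HasTwoJetAt f p H x) (hg : HasTwoJetAt g q K x) :
    HasTwoJetAt (fun y => f y + g y) (p + q) (H + K) x := by
  obtain ⟨f', hf', rfl, hH⟩ := hf
  obtain ⟨g', hg', rfl, hK⟩ := hg
  exact ⟨fun y => f' y + g' y, by filter_upwards [hf', hg'] with y hy hy' using hy.add hy', rfl,
    hH.add hK⟩

lemma const_mul (c : ℝ) (hf : HasTwoJetAt f p H x) :
    HasTwoJetAt (fun y => c * f y) (c • p) (c • H) x := by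
  obtain ⟨f', hf', rfl, hH⟩ := hf
  exact ⟨fun y => c • f' y, hf'.mono fun y hy => hy.const_mul c, rfl, hH.const_smul c⟩

lemma sub (hf : HasTwoJetAt f p H x) (hg : HasTwoJetAt g q K x) :
    HasTwoJetAt (fun y => f y - g y) (p - q) (H - K) x := by
  obtain ⟨f', hf', rfl, hH⟩ := hf
  obtain ⟨g', hg', rfl, hK⟩ := hg
  exact ⟨fun y => f' y - g' y, by filter_upwards [hf', hg'] with y hy hy' using hy.sub hy', rfl,
    hH.sub hK⟩

lemma mul (hf : HasTwoJetAt f p H x) (hg : HasTwoJetAt g q K x) :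
    HasTwoJetAt (fun y => f y * g y) (f x • q + g x • p)
      (f x • K + g x • H + (p.smulRight q + q.smulRight p)) x := by
  have hfx := hf.hasFDerivAt
  have hgx := hg.hasFDerivAt
  obtain ⟨f', hf', rfl, hH⟩ := hf
  obtain ⟨g', hg', rfl, hK⟩ := hg
  refine ⟨fun y => f y • g' y + g y • f' y, ?_, rfl, ?_⟩
  · filter_upwards [hf', hg'] with y hy hy' using hy.mul hy'
  · refine ((hfx.smul hK).add (hgx.smul hH)).congr_fderiv ?_
    ext a b
    simp only [add_apply, smul_apply, ContinuousLinearMap.smulRight_apply, smul_eq_mul]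
    ring

lemma scomp {h h' : ℝ → ℝ} {h'' : ℝ} (hh : ∀ y, HasDerivAt h (h' y) y)
    (hh' : HasDerivAt h' h'' (f x)) (hf : HasTwoJetAt f p H x) :
    HasTwoJetAt (fun y => h (f y)) (h' (f x) • p) (h' (f x) • H + h'' • p.smulRight p) x := by
  have hfx := hf.hasFDerivAt
  obtain ⟨f', hf', rfl, hH⟩ := hf
  refine ⟨fun y => h' (f y) • f' y, hf'.mono fun y hy => (hh (f y)).comp_hasFDerivAt y hy, rfl, ?_⟩
  refine ((hh'.comp_hasFDerivAt x hfx).smul hH).congr_fderiv ?_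
  ext a b
  simp only [add_apply, smul_apply, ContinuousLinearMap.smulRight_apply, smul_eq_mul,
    Function.comp_apply]
  ring

lemma comp_clm (T : E' →L[ℝ] E) {x : E'} (hf : HasTwoJetAt f p H (T x)) :
    HasTwoJetAt (fun y => f (T y)) (p.comp T) (H.bilinearComp T T) x := by
  obtain ⟨f', hf', rfl, hH⟩ := hf
  refine ⟨fun y => (f' (T y)).comp T, ?_, rfl, ?_⟩
  · filter_upwards [T.continuous.continuousAt.eventually hf'] with y hy
    exact hy.comp y T.hasFDerivAt
  · refine ((hH.comp x T.hasFDerivAt).clm_comp (hasFDerivAt_const T x)).congr_fderiv ?_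
    ext a b
    simp

end HasTwoJetAt

lemma second_deriv_nonneg_of_isLocalMin {φ φ' : ℝ → ℝ} {m t : ℝ}
    (hφ : ∀ᶠ s in 𝓝 t, HasDerivAt φ (φ' s) s) (hφ' : HasDerivAt φ' m t)
    (hmin : IsLocalMin φ t) : 0 ≤ m := by
  by_contra! hm
  have hderiv : deriv φ =ᶠ[𝓝 t] φ' := hφ.mono fun s hs => hs.deriv
  have hderiv2 : deriv (deriv φ) t = m := by rw [hderiv.deriv_eq, hφ'.deriv]
  have hmax : IsLocalMax φ t := isLocalMax_of_deriv_deriv_neg (by rwa [hderiv2])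
    hmin.deriv_eq_zero hφ.self_of_nhds.continuousAt
  have hconst : φ =ᶠ[𝓝 t] fun _ => φ t := by
    filter_upwards [hmin, hmax] with s hs hs' using le_antisymm hs' hs
  have hzero : deriv (deriv φ) t = 0 := by simp [hconst.deriv.deriv_eq]
  exact hm.ne (hderiv2.symm.trans hzero)

lemma HasTwoJetAt.nonneg_of_isLocalMin (hf : HasTwoJetAt f p H x) (hmin : IsLocalMin f x) (a : E) :
    0 ≤ H a a := by
  obtain ⟨f', hf', -, hH⟩ := hf
  have hline (s : ℝ) : HasDerivAt (fun s : ℝ => x + s • a) a s := by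
    simpa using ((hasDerivAt_id s).smul_const a).const_add x
  have htendsto : Tendsto (fun s : ℝ => x + s • a) (𝓝 0) (𝓝 x) := by
    simpa using (hline 0).continuousAt.tendsto
  refine second_deriv_nonneg_of_isLocalMin (φ := fun s => f (x + s • a))
    (φ' := fun s => f' (x + s • a) a) (t := 0) ?_ ?_ ?_
  · filter_upwards [htendsto.eventually hf'] with s hs using hs.comp_hasDerivAt s (hline s)
  · have hH' : HasFDerivAt f' H (x + (0 : ℝ) • a) := by simpa using hH
    exact (ContinuousLinearMap.apply ℝ ℝ a).hasFDerivAt.comp_hasDerivAt 0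
      (hH'.comp_hasDerivAt 0 (hline 0))
  · simpa [IsLocalMin, IsMinFilter] using htendsto.eventually hmin

lemma HasTwoJetAt.eq_zero_of_isLocalMin (hf : HasTwoJetAt f p H x) (hmin : IsLocalMin f x) :
    p = 0 := hmin.hasFDerivAt_eq_zero hf.hasFDerivAt

lemma hasTwoJetAt_norm_sub_sq {E : Type*} [NormedAddCommGroup E] [InnerProductSpace ℝ E] (c x : E) :
    HasTwoJetAt (fun y => ‖y - c‖ ^ 2) ((2 : ℝ) • innerSL ℝ (x - c)) ((2 : ℝ) • innerSL ℝ) x := by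
  refine ⟨fun y => (2 : ℝ) • innerSL ℝ (y - c), .of_forall fun y => ?_, rfl, ?_⟩
  · refine ((hasFDerivAt_id y).sub_const c).norm_sq.congr_fderiv ?_
    ext a
    simp
  · refine (((innerSL ℝ (E := E)).hasFDerivAt.comp x
      ((hasFDerivAt_id x).sub_const c)).const_smul (2 : ℝ)).congr_fderiv ?_
    ext a b
    simp

end TwoJets

section EllipticOperators

/-- The linear operators `H ↦ ∑ aᵢⱼ Hᵢⱼ` on second derivatives with ellipticity constant `α` and
norm at most `L`. Testing ellipticity on the rank-one forms `p ⊗ p` avoids a choice of basis. -/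
def ellipticClass (E : Type*) [NormedAddCommGroup E] [NormedSpace ℝ E] (α : ℝ) (L : ℝ≥0) :
    Set ((E →L[ℝ] E →L[ℝ] ℝ) →L[ℝ] ℝ) :=
  {A | (∀ p : E →L[ℝ] ℝ, α * ‖p‖ ^ 2 ≤ A (p.smulRight p)) ∧ ‖A‖ ≤ L}

section NormedSpace

variable {E : Type*} [NormedAddCommGroup E] [NormedSpace ℝ E] {α : ℝ} {L : ℝ≥0}

/-- `w` is, at `(x, t)`, a supersolution of all the equations
`w_t = A D²w + b·∇w + c w` with `A ∈ ellipticClass E α L`, `|b| ≤ L` and `|c| ≤ L` chosen in the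
worst way. The infimum of `A D²w` over `A` is expressed through its lower bounds `m`, so that no
convention for an empty or unbounded infimum intervenes. -/
def IsSupersolutionAt (α : ℝ) (L : ℝ≥0) (w : E → ℝ → ℝ) (x : E) (t : ℝ) : Prop :=
  ∃ (wt : ℝ) (p : E →L[ℝ] ℝ) (H : E →L[ℝ] E →L[ℝ] ℝ),
    HasDerivAt (w x) wt t ∧ HasTwoJetAt (fun y => w y t) p H x ∧
      ∀ m, (∀ A ∈ ellipticClass E α L, m ≤ A H) → m - L * ‖p‖ - L * |w x t| ≤ wt

/-- The differential inequality `inf_A A D²f(x) - L |∇f(x)| ≥ μ`, where the infimum is over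
`A ∈ ellipticClass E α L`. -/
def ExtremalGE (α : ℝ) (L : ℝ≥0) (f : E → ℝ) (x : E) (μ : ℝ) : Prop :=
  ∃ (p : E →L[ℝ] ℝ) (H : E →L[ℝ] E →L[ℝ] ℝ), HasTwoJetAt f p H x ∧
    ∀ A ∈ ellipticClass E α L, μ ≤ A H - L * ‖p‖

/-- `ψ` is, at `(x, t)`, a subsolution of all the equations `ψ_t = A D²ψ + b·∇ψ + c ψ` with
`A ∈ ellipticClass E α L`, `|b| ≤ L` and `|c| ≤ L`. -/
def IsSubsolutionAt (α : ℝ) (L : ℝ≥0) (ψ : E → ℝ → ℝ) (x : E) (t : ℝ) : Prop :=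
  ∃ ψt, HasDerivAt (ψ x) ψt t ∧ ExtremalGE α L (fun y => ψ y t) x (ψt + L * |ψ x t|)

end NormedSpace

variable {E : Type*} [NormedAddCommGroup E] [InnerProductSpace ℝ E] [FiniteDimensional ℝ E]
  {α : ℝ} {L : ℝ≥0}

lemma exists_orthonormalBasis_eq_sum_smulRight {H : E →L[ℝ] E →L[ℝ] ℝ}
    (hsymm : ∀ a b, H a b = H b a) :
    ∃ b : OrthonormalBasis (Fin (Module.finrank ℝ E)) ℝ E,
      H = ∑ i, H (b i) (b i) • (innerSL ℝ (b i)).smulRight (innerSL ℝ (b i)) := by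
  set T : E →ₗ[ℝ] E := ((InnerProductSpace.toDual ℝ E).symm.toLinearEquiv.toLinearMap ∘ₗ
    H.toLinearMap)
  have hT (a c : E) : ⟪T a, c⟫ = H a c := InnerProductSpace.toDual_symm_apply
  have hTsymm : T.IsSymmetric := fun a c => by
    rw [hT, real_inner_comm, hT, hsymm]
  set b := hTsymm.eigenvectorBasis rfl
  have hHb (i) : H (b i) = H (b i) (b i) • innerSL ℝ (b i) := by
    have heigen (c : E) : H (b i) c = hTsymm.eigenvalues rfl i * ⟪b i, c⟫ := by
      rw [← hT, hTsymm.apply_eigenvectorBasis rfl i]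
      simp [b, inner_smul_left]
    ext c
    simp [heigen]
  refine ⟨b, ContinuousLinearMap.ext fun a => ?_⟩
  calc H a = ∑ i, ⟪b i, a⟫ • H (b i) := by
        conv_lhs => rw [← b.sum_repr a]
        simp [map_sum, b.repr_apply_apply]
    _ = _ := by
        simp only [sum_apply, smul_apply, ContinuousLinearMap.smulRight_apply,
          innerSL_apply_apply]
        refine Finset.sum_congr rfl fun i _ => ?_
        rw [hHb i, smul_comm]
        simp

lemma nonneg_of_mem_ellipticClass (hα : 0 ≤ α) {A : (E →L[ℝ] E →L[ℝ] ℝ) →L[ℝ] ℝ}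
    (hA : A ∈ ellipticClass E α L) {H : E →L[ℝ] E →L[ℝ] ℝ} (hsymm : ∀ a b, H a b = H b a)
    (hnonneg : ∀ a, 0 ≤ H a a) : 0 ≤ A H := by
  obtain ⟨b, hb⟩ := exists_orthonormalBasis_eq_sum_smulRight hsymm
  rw [hb, map_sum]
  refine Finset.sum_nonneg fun i _ => ?_
  rw [map_smul, smul_eq_mul]
  exact mul_nonneg (hnonneg _) ((mul_nonneg hα (sq_nonneg _)).trans (hA.1 _))

end EllipticOperators

section Comparison

lemma deriv_nonpos_of_nonneg_left {f : ℝ → ℝ} {f' a t : ℝ} (hat : a < t) (hf : HasDerivAt f f' t)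
    (hnonneg : ∀ s ∈ Ioo a t, 0 ≤ f s) (hft : f t ≤ 0) : f' ≤ 0 := by
  have hslope := (hasDerivWithinAt_iff_tendsto_slope' (s := Iio t) (by simp)).1 hf.hasDerivWithinAt
  refine le_of_tendsto hslope ?_
  filter_upwards [Ioo_mem_nhdsLT hat] with s hs
  rw [slope_def_field]
  exact div_nonpos_of_nonneg_of_nonpos (by linarith [hnonneg s hs]) (by linarith [hs.2])

lemma exists_first_zero {X : Type*} [TopologicalSpace X] [T2Space X] {K : Set X}
    (hK : IsCompact K) {a b : ℝ} {V : X → ℝ → ℝ}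
    (hV : ContinuousOn (fun z : X × ℝ => V z.1 z.2) (K ×ˢ Icc a b)) (hinit : ∀ x ∈ K, 0 < V x a)
    (hnonpos : ∃ x ∈ K, ∃ t ∈ Icc a b, V x t ≤ 0) :
    ∃ y ∈ K, ∃ τ ∈ Ioc a b, V y τ = 0 ∧ ∀ x ∈ K, ∀ t ∈ Icc a τ, 0 ≤ V x t := by
  have hKI : IsCompact (K ×ˢ Icc a b) := hK.prod isCompact_Icc
  set Z := (K ×ˢ Icc a b) ∩ (fun z : X × ℝ => V z.1 z.2) ⁻¹' Iic 0
  have hZ : IsCompact Z := hKI.of_isClosed_subset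
    (hV.preimage_isClosed_of_isClosed hKI.isClosed isClosed_Iic) inter_subset_left
  obtain ⟨x, hx, t, ht, hxt⟩ := hnonpos
  obtain ⟨⟨y, τ⟩, ⟨⟨hy, hτ⟩, hyτ⟩, hfirst⟩ :=
    hZ.exists_isMinOn ⟨(x, t), ⟨hx, ht⟩, hxt⟩ continuous_snd.continuousOn
  have haτ : a < τ := hτ.1.lt_of_ne fun h => (hinit y hy).not_ge (h ▸ hyτ)
  have hbefore : ∀ z ∈ K, ∀ s ∈ Ico a τ, 0 < V z s := fun z hz s hs => by
    by_contra! h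
    exact hs.2.not_ge (hfirst (show (z, s) ∈ Z from ⟨⟨hz, hs.1, hs.2.le.trans hτ.2⟩, h⟩))
  have hupto : ∀ z ∈ K, ∀ s ∈ Icc a τ, 0 ≤ V z s := fun z hz s hs => by
    have hcont : ContinuousOn (V z) (Icc a τ) := hV.comp (f := fun s => (z, s))
      (by fun_prop) fun s hs => ⟨hz, hs.1, hs.2.trans hτ.2⟩
    rw [← closure_Ico haτ.ne] at hcont hs
    exact closure_minimal (image_subset_iff.2 fun r hr => (hbefore z hz r hr).le)
      (isClosed_Ici (a := (0 : ℝ))) (hcont.image_closure ⟨s, hs, rfl⟩)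
  exact ⟨y, hy, τ, ⟨haτ, hτ.2⟩, le_antisymm hyτ (hupto y hy τ ⟨hτ.1, le_rfl⟩), hupto⟩

variable {E : Type*} [NormedAddCommGroup E] [InnerProductSpace ℝ E] [FiniteDimensional ℝ E]
  {α : ℝ} {L : ℝ≥0}

lemma exists_hasDerivAt_ge_of_isLocalMin (hα : 0 ≤ α) {w ψ : E → ℝ → ℝ} {y : E} {τ : ℝ}
    (hw : IsSupersolutionAt α L w y τ) (hψ : IsSubsolutionAt α L ψ y τ)
    (hmin : IsLocalMin (fun x => w x τ - ψ x τ) y) :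
    ∃ d, HasDerivAt (fun s => w y s - ψ y s) d τ ∧ -(L * |w y τ - ψ y τ|) ≤ d := by
  obtain ⟨wt, p, H, hwt, hwjet, hwsuper⟩ := hw
  obtain ⟨ψt, hψt, p', H', hψjet, hψsub⟩ := hψ
  have hjet := hwjet.sub hψjet
  have hp : p = p' := sub_eq_zero.1 (hjet.eq_zero_of_isLocalMin hmin)
  have hbound := hwsuper (ψt + L * ‖p'‖ + L * |ψ y τ|) fun A hA => by
    have hHH' := nonneg_of_mem_ellipticClass hα hA hjet.symmetric
      (hjet.nonneg_of_isLocalMin hmin)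
    rw [map_sub] at hHH'
    linarith [hψsub A hA]
  have habs : L * |w y τ| ≤ L * |ψ y τ| + L * |w y τ - ψ y τ| := by
    rw [← mul_add]
    gcongr
    linarith [abs_sub_abs_le_abs_sub (w y τ) (ψ y τ)]
  exact ⟨wt - ψt, hwt.sub hψt, by rw [hp] at hbound; linarith⟩

theorem comparison_strict (hα : 0 ≤ α) {K D : Set E} (hK : IsCompact K)
    (hD : IsOpen D) (hDK : D ⊆ K) {w ψ : E → ℝ → ℝ} {a b : ℝ}
    (hw : ContinuousOn (fun z : E × ℝ => w z.1 z.2) (K ×ˢ Icc a b))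
    (hψ : ContinuousOn (fun z : E × ℝ => ψ z.1 z.2) (K ×ˢ Icc a b))
    (hinit : ∀ x ∈ K, ψ x a ≤ w x a)
    (hbdry : ∀ x ∈ K \ D, ∀ t ∈ Ioc a b, ψ x t ≤ w x t)
    (hsuper : ∀ x ∈ D, ∀ t ∈ Ioc a b, IsSupersolutionAt α L w x t)
    (hsub : ∀ x ∈ D, ∀ t ∈ Ioc a b, IsSubsolutionAt α L ψ x t) {μ : ℝ} (hμ : 0 < μ) :
    ∀ x ∈ K, ∀ t ∈ Icc a b, 0 < w x t - ψ x t + μ * Real.exp ((L + 1) * t) := by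
  by_contra! hcon
  have hexp (s : ℝ) : 0 < μ * Real.exp ((L + 1) * s) := by positivity
  obtain ⟨y, hy, τ, hτ, hyτ, hnonneg⟩ := exists_first_zero hK ((hw.sub hψ).add (by fun_prop))
    (fun x hx => by linarith [hinit x hx, hexp a]) hcon
  have hyD : y ∈ D := by
    by_contra hyD
    linarith [hbdry y ⟨hy, hyD⟩ τ hτ, hexp τ]
  have hmin : IsLocalMin (fun x => w x τ - ψ x τ) y := by
    filter_upwards [hD.mem_nhds hyD] with x hx
    linarith [hnonneg x (hDK hx) τ ⟨hτ.1.le, le_rfl⟩]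
  obtain ⟨d, hd, hdge⟩ := exists_hasDerivAt_ge_of_isLocalMin hα (hsuper y hyD τ hτ)
    (hsub y hyD τ hτ) hmin
  have hexpderiv : HasDerivAt (fun s => μ * Real.exp ((L + 1) * s))
      (μ * (Real.exp ((L + 1) * τ) * (L + 1))) τ := by
    simpa using (((hasDerivAt_id τ).const_mul ((L : ℝ) + 1)).exp).const_mul μ
  have hderiv := deriv_nonpos_of_nonneg_left hτ.1 (hd.add hexpderiv)
    (fun s hs => hnonneg y hy s ⟨hs.1.le, hs.2.le⟩) hyτ.le
  have habs : |w y τ - ψ y τ| = μ * Real.exp ((L + 1) * τ) := by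
    rw [eq_neg_of_add_eq_zero_left hyτ, abs_neg, abs_of_pos (hexp τ)]
  rw [habs] at hdge
  linarith [hexp τ]

/-- `K` stands for the closure of `D`. -/
theorem comparison (hα : 0 ≤ α) {K D : Set E} (hK : IsCompact K)
    (hD : IsOpen D) (hDK : D ⊆ K) {w ψ : E → ℝ → ℝ} {a b : ℝ}
    (hw : ContinuousOn (fun z : E × ℝ => w z.1 z.2) (K ×ˢ Icc a b))
    (hψ : ContinuousOn (fun z : E × ℝ => ψ z.1 z.2) (K ×ˢ Icc a b))
    (hinit : ∀ x ∈ K, ψ x a ≤ w x a)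
    (hbdry : ∀ x ∈ K \ D, ∀ t ∈ Ioc a b, ψ x t ≤ w x t)
    (hsuper : ∀ x ∈ D, ∀ t ∈ Ioc a b, IsSupersolutionAt α L w x t)
    (hsub : ∀ x ∈ D, ∀ t ∈ Ioc a b, IsSubsolutionAt α L ψ x t) :
    ∀ x ∈ K, ∀ t ∈ Icc a b, ψ x t ≤ w x t := by
  intro x hx t ht
  refine le_of_forall_pos_le_add fun ε hε => ?_
  have h := comparison_strict hα hK hD hDK hw hψ hinit hbdry hsuper hsub
    (μ := ε / Real.exp ((L + 1) * t)) (by positivity) x hx t ht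
  rw [div_mul_cancel₀ _ (Real.exp_ne_zero _)] at h
  linarith

end Comparison

section MeanValue

variable {X : Type*} [NormedAddCommGroup X] [NormedSpace ℝ X] {U : Set X} {Φ : X → ℝ} {L : ℝ≥0}

lemma eventually_lt_slope_of_hasLineDerivAt (hU : IsOpen U) (hΦ : LipschitzOnWith L Φ U)
    {P a b : X} {d r s : ℝ} (hP : P + s • a ∈ U) (hd : HasLineDerivAt ℝ Φ d (P + s • a) b)
    (hr : r < d - L * ‖a - b‖) :
    ∀ᶠ z in 𝓝[>] s, r < slope (fun z => Φ (P + z • a)) s z := by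
  set Q := P + s • a
  have hslope : ∀ᶠ z in 𝓝[>] s, r + L * ‖a - b‖ < (z - s)⁻¹ * (Φ (Q + (z - s) • b) - Φ Q) := by
    have htendsto : Tendsto (fun z => z - s) (𝓝[>] s) (𝓝[>] 0) := by
      refine tendsto_nhdsWithin_iff.2 ⟨?_, eventually_nhdsWithin_of_forall fun z hz =>
        mem_Ioi.2 (sub_pos.2 hz)⟩
      exact ((continuous_id.sub continuous_const).tendsto' s 0 (sub_self s)).mono_left
        nhdsWithin_le_nhds
    exact (hd.tendsto_slope_zero_right.comp htendsto).eventually (lt_mem_nhds (by linarith))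
  have hmem : ∀ᶠ z in 𝓝[>] s, P + z • a ∈ U ∧ Q + (z - s) • b ∈ U := by
    refine nhdsWithin_le_nhds (Eventually.and ?_ ?_)
    · exact (by fun_prop : Continuous fun z : ℝ => P + z • a).continuousAt.eventually
        (hU.mem_nhds hP)
    · exact (by fun_prop : Continuous fun z : ℝ => Q + (z - s) • b).continuousAt.eventually
        (hU.mem_nhds (by simpa using hP))
  filter_upwards [hslope, hmem, self_mem_nhdsWithin] with z hz ⟨hza, hzb⟩ hsz
  have hzs : 0 < z - s := sub_pos.2 hsz
  have hlip : Φ (Q + (z - s) • b) - Φ (P + z • a) ≤ L * ((z - s) * ‖a - b‖) := by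
    refine (le_abs_self _).trans ((hΦ.norm_sub_le hzb hza).trans_eq ?_)
    rw [norm_sub_rev, show P + z • a - (Q + (z - s) • b) = (z - s) • (a - b) by
      simp only [Q]; module, norm_smul, Real.norm_of_nonneg hzs.le]
  rw [inv_mul_eq_div, lt_div_iff₀ hzs] at hz
  rw [slope_def_field, lt_div_iff₀ hzs]
  linarith

/-- The increment of a function that is merely Lipschitz, but has line derivatives in the
direction `b`, is estimated by integrating its lower Dini derivatives along the segment. -/
theorem sub_mul_norm_le_sub_of_hasLineDerivAt (hU : IsOpen U) (hUconv : Convex ℝ U)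
    (hΦ : LipschitzOnWith L Φ U) {b : X} {m : ℝ}
    (hderiv : ∀ Q ∈ U, ∃ d ≥ m, HasLineDerivAt ℝ Φ d Q b) {P P' : X} (hP : P ∈ U) (hP' : P' ∈ U) :
    m - L * ‖P - P' - b‖ ≤ Φ P - Φ P' := by
  set a := P - P'
  set c := m - L * ‖a - b‖
  have hsegment : ∀ s ∈ Icc (0 : ℝ) 1, P' + s • a ∈ U := fun s hs =>
    hUconv.add_smul_sub_mem hP' hP hs
  have hcont : ContinuousOn (fun s : ℝ => -Φ (P' + s • a)) (Icc 0 1) :=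
    (hΦ.continuousOn.comp (by fun_prop) hsegment).neg
  have hbound := image_le_of_liminf_slope_right_le_deriv_boundary (B := fun s => -Φ P' + -c * s)
    (B' := fun _ => -c) hcont (by simp) (by fun_prop)
    (fun s _ => (by simpa using ((hasDerivAt_id s).const_mul (-c)).const_add (-Φ P') :
      HasDerivAt (fun s => -Φ P' + -c * s) (-c) s).hasDerivWithinAt)
    (fun s hs r hr => by
      have hs' := hsegment s ⟨hs.1, hs.2.le⟩
      obtain ⟨d, hmd, hd⟩ := hderiv _ hs'
      refine Eventually.frequently ?_
      filter_upwards [eventually_lt_slope_of_hasLineDerivAt hU hΦ hs' hd (r := -r)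
        (by linarith)] with z hz
      rw [slope_neg]
      linarith)
    (right_mem_Icc.2 zero_le_one)
  have hend : P' + a = P := by simp [a]
  simp only [one_smul, mul_one, hend] at hbound
  linarith

end MeanValue

section Coordinates

lemma gradVec_eq_toDual_symm (p : EuclideanSpace ℝ (Fin N) →L[ℝ] ℝ) :
    gradVec p = (InnerProductSpace.toDual ℝ (EuclideanSpace ℝ (Fin N))).symm p := by
  ext i
  have h := InnerProductSpace.toDual_symm_apply (𝕜 := ℝ) (x := EuclideanSpace.single i (1 : ℝ))
    (y := p)
  rw [EuclideanSpace.inner_single_right] at h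
  rw [one_mul, conj_trivial] at h
  exact h.symm

lemma norm_gradVec_sub (p q : EuclideanSpace ℝ (Fin N) →L[ℝ] ℝ) :
    ‖gradVec p - gradVec q‖ = ‖p - q‖ := by
  rw [gradVec_eq_toDual_symm, gradVec_eq_toDual_symm, ← map_sub, LinearIsometryEquiv.norm_map]

/-- `hessMat` as a continuous linear map. -/
def hessMatCLM (N : ℕ) :
    (EuclideanSpace ℝ (Fin N) →L[ℝ] EuclideanSpace ℝ (Fin N) →L[ℝ] ℝ) →L[ℝ]
      (Fin N → Fin N → ℝ) :=
  .pi fun i => .pi fun j => (ContinuousLinearMap.apply ℝ ℝ (EuclideanSpace.single j 1)).comp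
    (ContinuousLinearMap.apply ℝ _ (EuclideanSpace.single i 1))

lemma hessMatCLM_apply (H : EuclideanSpace ℝ (Fin N) →L[ℝ] EuclideanSpace ℝ (Fin N) →L[ℝ] ℝ) :
    hessMatCLM N H = hessMat H := rfl

lemma norm_hessMatCLM_le : ‖hessMatCLM N‖ ≤ 1 := by
  refine ContinuousLinearMap.opNorm_le_bound _ zero_le_one fun H => ?_
  rw [one_mul, pi_norm_le_iff_of_nonneg (norm_nonneg _)]
  refine fun i => (pi_norm_le_iff_of_nonneg (norm_nonneg _)).2 fun j => ?_
  simpa [hessMatCLM_apply, hessMat] using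
    H.le_opNorm₂ (EuclideanSpace.single i 1) (EuclideanSpace.single j 1)

lemma hessMat_smulRight_self (p : EuclideanSpace ℝ (Fin N) →L[ℝ] ℝ) :
    hessMat (p.smulRight p) = fun i j => gradVec p i * gradVec p j := by
  ext i j
  simp [hessMat, gradVec]

end Coordinates

section Reflections

variable {e : EuclideanSpace ℝ (Fin N)}

lemma reflHyp_eq_reflection (he : ‖e‖ = 1) (x : EuclideanSpace ℝ (Fin N)) :
    reflHyp e x = (ℝ ∙ e)ᗮ.reflection x := by
  rw [Submodule.reflection_orthogonal_apply, Submodule.reflection_singleton_apply, reflHyp,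
    real_inner_comm]
  simp only [he, RCLike.ofReal_one, one_pow, div_one]
  module

lemma norm_reflHyp (he : ‖e‖ = 1) (x : EuclideanSpace ℝ (Fin N)) : ‖reflHyp e x‖ = ‖x‖ := by
  rw [reflHyp_eq_reflection he, LinearIsometryEquiv.norm_map]

lemma reflHyp_reflHyp (he : ‖e‖ = 1) (x : EuclideanSpace ℝ (Fin N)) :
    reflHyp e (reflHyp e x) = x := by
  simp only [reflHyp_eq_reflection he, Submodule.reflection_reflection]

lemma continuous_reflHyp : Continuous fun z : EuclideanSpace ℝ (Fin N) × EuclideanSpace ℝ (Fin N) =>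
    reflHyp z.1 z.2 := by
  unfold reflHyp
  fun_prop

lemma reflHyp_apply (e x : EuclideanSpace ℝ (Fin N)) (i : Fin N) :
    reflHyp e x i = ∑ j, reflMat e i j * x j := by
  simp only [reflMat, sub_mul, ite_mul, one_mul, zero_mul, Finset.sum_sub_distrib,
    Finset.sum_ite_eq, Finset.mem_univ, if_true]
  simp only [reflHyp, PiLp.sub_apply, PiLp.smul_apply, smul_eq_mul, PiLp.inner_apply,
    RCLike.inner_apply, conj_trivial, Finset.mul_sum, Finset.sum_mul]
  congr 1
  exact Finset.sum_congr rfl fun j _ => by ring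

lemma reflHyp_single (e : EuclideanSpace ℝ (Fin N)) (i : Fin N) :
    reflHyp e (EuclideanSpace.single i 1) =
      ∑ k, reflMat e i k • EuclideanSpace.single k (1 : ℝ) := by
  ext j
  rw [reflHyp_apply]
  simp [reflMat, Pi.single_apply, eq_comm, mul_right_comm]

variable {T : EuclideanSpace ℝ (Fin N) →L[ℝ] EuclideanSpace ℝ (Fin N)}

lemma gradVec_comp_reflHyp (hT : ∀ x, T x = reflHyp e x)
    (p : EuclideanSpace ℝ (Fin N) →L[ℝ] ℝ) : gradVec (p.comp T) = reflHyp e (gradVec p) := by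
  ext i
  simp [reflHyp_apply, gradVec, hT, reflHyp_single]

lemma hessMat_bilinearComp_reflHyp (hT : ∀ x, T x = reflHyp e x)
    (H : EuclideanSpace ℝ (Fin N) →L[ℝ] EuclideanSpace ℝ (Fin N) →L[ℝ] ℝ) :
    hessMat (H.bilinearComp T T) = matConj (reflMat e) (hessMat H) := by
  have hsymm (j l) : reflMat e l j = reflMat e j l := by
    simp [reflMat, eq_comm, mul_right_comm]
  ext i j
  simp only [hessMat, ContinuousLinearMap.bilinearComp_apply, hT, reflHyp_single, map_sum, map_smul,
    sum_apply, smul_apply, smul_eq_mul, matConj, Finset.mul_sum, hsymm j]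
  refine Finset.sum_comm.trans (Finset.sum_congr rfl fun k _ => Finset.sum_congr rfl fun l _ => ?_)
  ring

end Reflections

section Nonlinearity

/-- The structural conditions (F2) and (F4) on the nonlinearity `Φ = F(t, x, ·)`, with values of
the matrix derivative recorded by `Φq`. -/
structure IsEllipticNonlinearity (𝓑 : Set (ℝ × EuclideanSpace ℝ (Fin N) × (Fin N → Fin N → ℝ)))
    (Φ : ℝ × EuclideanSpace ℝ (Fin N) × (Fin N → Fin N → ℝ) → ℝ)
    (Φq : ℝ × EuclideanSpace ℝ (Fin N) × (Fin N → Fin N → ℝ) → ((Fin N → Fin N → ℝ) →L[ℝ] ℝ))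
    (α : ℝ) (L : ℝ≥0) : Prop where
  isOpen : IsOpen 𝓑
  convex : Convex ℝ 𝓑
  lipschitz : LipschitzOnWith L Φ 𝓑
  hasFDerivAt : ∀ v p q, (v, p, q) ∈ 𝓑 → HasFDerivAt (fun q' => Φ (v, p, q')) (Φq (v, p, q)) q
  elliptic : ∀ P ∈ 𝓑, ∀ ξ : Fin N → ℝ, α * ∑ i, ξ i ^ 2 ≤ Φq P (fun i j => ξ i * ξ j)

namespace IsEllipticNonlinearity

variable {𝓑 : Set (ℝ × EuclideanSpace ℝ (Fin N) × (Fin N → Fin N → ℝ))}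
  {Φ : ℝ × EuclideanSpace ℝ (Fin N) × (Fin N → Fin N → ℝ) → ℝ}
  {Φq : ℝ × EuclideanSpace ℝ (Fin N) × (Fin N → Fin N → ℝ) → ((Fin N → Fin N → ℝ) →L[ℝ] ℝ)}
  {α : ℝ} {L : ℝ≥0}

lemma norm_deriv_le (hΦ : IsEllipticNonlinearity 𝓑 Φ Φq α L)
    {P : ℝ × EuclideanSpace ℝ (Fin N) × (Fin N → Fin N → ℝ)} (hP : P ∈ 𝓑) : ‖Φq P‖ ≤ L := by
  refine (hΦ.hasFDerivAt _ _ _ hP).le_of_lip' L.2 ?_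
  have hcont : Continuous fun q : Fin N → Fin N → ℝ => (P.1, P.2.1, q) := by fun_prop
  filter_upwards [(hΦ.isOpen.preimage hcont).mem_nhds hP] with q hq
  simpa [Prod.norm_def] using hΦ.lipschitz.norm_sub_le hq hP

lemma comp_hessMatCLM_mem_ellipticClass (hΦ : IsEllipticNonlinearity 𝓑 Φ Φq α L)
    {P : ℝ × EuclideanSpace ℝ (Fin N) × (Fin N → Fin N → ℝ)} (hP : P ∈ 𝓑) :
    (Φq P).comp (hessMatCLM N) ∈ ellipticClass (EuclideanSpace ℝ (Fin N)) α L := by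
  refine ⟨fun p => ?_, ?_⟩
  · have hnorm : ∑ i, gradVec p i ^ 2 = ‖p‖ ^ 2 := by
      rw [← EuclideanSpace.real_norm_sq_eq, gradVec_eq_toDual_symm, LinearIsometryEquiv.norm_map]
    rw [ContinuousLinearMap.comp_apply, hessMatCLM_apply, hessMat_smulRight_self, ← hnorm]
    exact hΦ.elliptic P hP (gradVec p)
  · calc ‖(Φq P).comp (hessMatCLM N)‖ ≤ ‖Φq P‖ * ‖hessMatCLM N‖ :=
          ContinuousLinearMap.opNorm_comp_le _ _
      _ ≤ L * 1 := by gcongr; exacts [hΦ.norm_deriv_le hP, norm_hessMatCLM_le]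
      _ = L := mul_one _

lemma sub_le_sub (hΦ : IsEllipticNonlinearity 𝓑 Φ Φq α L) {v v' : ℝ}
    {p p' : EuclideanSpace ℝ (Fin N) →L[ℝ] ℝ}
    {H H' : EuclideanSpace ℝ (Fin N) →L[ℝ] EuclideanSpace ℝ (Fin N) →L[ℝ] ℝ}
    (hP : (v, gradVec p, hessMat H) ∈ 𝓑) (hP' : (v', gradVec p', hessMat H') ∈ 𝓑) {m : ℝ}
    (hm : ∀ A ∈ ellipticClass (EuclideanSpace ℝ (Fin N)) α L, m ≤ A (H - H')) :
    m - L * ‖p - p'‖ - L * |v - v'| ≤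
      Φ (v, gradVec p, hessMat H) - Φ (v', gradVec p', hessMat H') := by
  set b : ℝ × EuclideanSpace ℝ (Fin N) × (Fin N → Fin N → ℝ) := (0, 0, hessMat (H - H'))
  have hline : ∀ Q ∈ 𝓑, ∃ d ≥ m, HasLineDerivAt ℝ Φ d Q b := fun Q hQ => by
    refine ⟨Φq Q (hessMat (H - H')), hm _ (hΦ.comp_hessMatCLM_mem_ellipticClass hQ), ?_⟩
    have hline (t : ℝ) : Q + t • b = (Q.1, Q.2.1, Q.2.2 + t • hessMat (H - H')) := by
      ext1 <;> simp [b, Prod.ext_iff]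
    simpa only [HasLineDerivAt, hline] using
      (hΦ.hasFDerivAt _ _ _ hQ).hasLineDerivAt (hessMat (H - H'))
  have hmean := sub_mul_norm_le_sub_of_hasLineDerivAt hΦ.isOpen hΦ.convex hΦ.lipschitz hline hP hP'
  have hnorm : ‖(v, gradVec p, hessMat H) - (v', gradVec p', hessMat H') - b‖ ≤
      ‖p - p'‖ + |v - v'| := by
    simp only [b, ← hessMatCLM_apply, map_sub, Prod.mk_sub_mk, sub_zero, sub_self, Prod.norm_mk,
      norm_zero, norm_gradVec_sub, Real.norm_eq_abs]
    have := abs_nonneg (v - v')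
    have := norm_nonneg (p - p')
    refine max_le ?_ (max_le ?_ ?_) <;> linarith
  have hLnorm := mul_le_mul_of_nonneg_left hnorm L.coe_nonneg
  rw [mul_add] at hLnorm
  linarith

end IsEllipticNonlinearity

/-- The reflection difference `w_e = u - u ∘ σ_e`. -/
def reflDiff (u : EuclideanSpace ℝ (Fin N) → ℝ → ℝ) (e x : EuclideanSpace ℝ (Fin N)) (t : ℝ) : ℝ :=
  u x t - u (reflHyp e x) t

lemma IsEllipticNonlinearity.isSupersolutionAt_reflDiff
    {𝓑 : Set (ℝ × EuclideanSpace ℝ (Fin N) × (Fin N → Fin N → ℝ))}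
    {Φ : ℝ × EuclideanSpace ℝ (Fin N) × (Fin N → Fin N → ℝ) → ℝ}
    {Φq : ℝ × EuclideanSpace ℝ (Fin N) × (Fin N → Fin N → ℝ) → ((Fin N → Fin N → ℝ) →L[ℝ] ℝ)}
    {α : ℝ} {L : ℝ≥0} (hΦ : IsEllipticNonlinearity 𝓑 Φ Φq α L)
    {u : EuclideanSpace ℝ (Fin N) → ℝ → ℝ} {e x : EuclideanSpace ℝ (Fin N)} {t : ℝ}
    (he : ‖e‖ = 1) {p p' : EuclideanSpace ℝ (Fin N) →L[ℝ] ℝ}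
    {H H' : EuclideanSpace ℝ (Fin N) →L[ℝ] EuclideanSpace ℝ (Fin N) →L[ℝ] ℝ}
    (hjet : HasTwoJetAt (fun y => u y t) p H x)
    (hjet' : HasTwoJetAt (fun y => u y t) p' H' (reflHyp e x))
    (hmem : (u x t, gradVec p, hessMat H) ∈ 𝓑)
    (hmem' : (u (reflHyp e x) t, reflHyp e (gradVec p'), matConj (reflMat e) (hessMat H')) ∈ 𝓑)
    (hderiv : HasDerivAt (u x) (Φ (u x t, gradVec p, hessMat H)) t)
    (hderiv' : HasDerivAt (u (reflHyp e x))
      (Φ (u (reflHyp e x) t, reflHyp e (gradVec p'), matConj (reflMat e) (hessMat H'))) t) :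
    IsSupersolutionAt α L (reflDiff u e) x t := by
  set T : EuclideanSpace ℝ (Fin N) →L[ℝ] EuclideanSpace ℝ (Fin N) :=
    (ℝ ∙ e)ᗮ.reflection.toContinuousLinearEquiv.toContinuousLinearMap
  have hT (y) : T y = reflHyp e y := (reflHyp_eq_reflection he y).symm
  have hjetT : HasTwoJetAt (fun y => u (reflHyp e y) t) (p'.comp T) (H'.bilinearComp T T) x := by
    simpa only [hT] using HasTwoJetAt.comp_clm T (by rwa [hT])
  rw [← gradVec_comp_reflHyp hT, ← hessMat_bilinearComp_reflHyp hT] at hmem' hderiv'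
  exact ⟨_, _, _, hderiv.sub hderiv', hjet.sub hjetT, fun m hm => hΦ.sub_le_sub hmem hmem' hm⟩

end Nonlinearity

section Barriers

variable {E : Type*} [NormedAddCommGroup E] [NormedSpace ℝ E] {α : ℝ} {L : ℝ≥0}
  {f g : E → ℝ} {x : E} {μ ν : ℝ}

namespace ExtremalGE

lemma mono (hf : ExtremalGE α L f x μ) (hνμ : ν ≤ μ) : ExtremalGE α L f x ν := by
  obtain ⟨p, H, hjet, hle⟩ := hf
  exact ⟨p, H, hjet, fun A hA => hνμ.trans (hle A hA)⟩

lemma const (c : ℝ) (x : E) : ExtremalGE α L (fun _ => c) x 0 :=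
  ⟨0, 0, .const c x, by simp⟩

lemma add (hf : ExtremalGE α L f x μ) (hg : ExtremalGE α L g x ν) :
    ExtremalGE α L (fun y => f y + g y) x (μ + ν) := by
  obtain ⟨p, H, hjet, hle⟩ := hf
  obtain ⟨q, K, hjet', hle'⟩ := hg
  refine ⟨p + q, H + K, hjet.add hjet', fun A hA => ?_⟩
  have hnorm := mul_le_mul_of_nonneg_left (norm_add_le p q) L.coe_nonneg
  rw [map_add]
  linarith [hle A hA, hle' A hA]

lemma const_mul {c : ℝ} (hc : 0 ≤ c) (hf : ExtremalGE α L f x μ) :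
    ExtremalGE α L (fun y => c * f y) x (c * μ) := by
  obtain ⟨p, H, hjet, hle⟩ := hf
  refine ⟨c • p, c • H, hjet.const_mul c, fun A hA => ?_⟩
  rw [map_smul, norm_smul, Real.norm_of_nonneg hc, smul_eq_mul]
  linarith [mul_le_mul_of_nonneg_left (hle A hA) hc]

end ExtremalGE

lemma isSubsolutionAt_exp_mul {c : ℝ} (hc : 0 ≤ c) {κ a φt t : ℝ} {φ : E → ℝ → ℝ}
    (hφ : HasDerivAt (φ x) φt t)
    (hextremal : ExtremalGE α L (fun y => φ y t) x (φt - κ * φ x t + L * |φ x t|)) :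
    IsSubsolutionAt α L (fun y s => c * Real.exp (-κ * (s - a)) * φ y s) x t := by
  have hexp : HasDerivAt (fun s => c * Real.exp (-κ * (s - a)))
      (c * (Real.exp (-κ * (t - a)) * -κ)) t := by
    simpa using (((hasDerivAt_id t).sub_const a).const_mul (-κ)).exp.const_mul c
  have hcoef : 0 ≤ c * Real.exp (-κ * (t - a)) := by positivity
  refine ⟨_, hexp.mul hφ, (hextremal.const_mul hcoef).mono (le_of_eq ?_)⟩
  rw [abs_mul, abs_of_nonneg hcoef]
  ring

lemma hasDerivAt_posPart_pow (k : ℕ) (y : ℝ) :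
    HasDerivAt (fun z : ℝ => z⁺ ^ (k + 2)) ((k + 2) * y⁺ ^ (k + 1)) y := by
  have hpow (z : ℝ) : HasDerivAt (fun z : ℝ => z ^ (k + 2)) ((k + 2) * z ^ (k + 1)) z := by
    simpa using hasDerivAt_pow (k + 2) z
  rcases lt_trichotomy y 0 with hy | rfl | hy
  · rw [posPart_of_nonpos hy.le, zero_pow k.succ_ne_zero, mul_zero]
    refine (hasDerivAt_const y (0 : ℝ)).congr_of_eventuallyEq ?_
    filter_upwards [Iio_mem_nhds hy] with z hz
    rw [posPart_of_nonpos (mem_Iio.1 hz).le, zero_pow (by omega)]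
  · rw [posPart_zero, ← hasDerivWithinAt_univ, ← Iic_union_Ici (a := 0)]
    refine HasDerivWithinAt.union ?_ ?_
    · rw [zero_pow k.succ_ne_zero, mul_zero]
      refine (hasDerivWithinAt_const (0 : ℝ) _ (0 : ℝ)).congr (fun z hz => ?_) (by simp)
      rw [posPart_of_nonpos hz, zero_pow (by omega)]
    · refine (hpow 0).hasDerivWithinAt.congr (fun z hz => ?_) (by simp)
      rw [posPart_of_nonneg hz]
  · rw [posPart_of_nonneg hy.le]
    refine (hpow y).congr_of_eventuallyEq ?_
    filter_upwards [Ioi_mem_nhds hy] with z hz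
    rw [posPart_of_nonneg (mem_Ioi.1 hz).le]

lemma neg_mul_norm_le_of_mem_ellipticClass {A : (E →L[ℝ] E →L[ℝ] ℝ) →L[ℝ] ℝ}
    (hA : A ∈ ellipticClass E α L) (H : E →L[ℝ] E →L[ℝ] ℝ) : -(L * ‖H‖) ≤ A H :=
  (abs_le.1 (A.le_of_opNorm_le hA.2 H)).1

lemma HasTwoJetAt.extremalGE_posPart_pow {p : E →L[ℝ] ℝ} {H : E →L[ℝ] E →L[ℝ] ℝ}
    (hf : HasTwoJetAt f p H x) (k : ℕ) :
    ExtremalGE α L (fun y => (f y)⁺ ^ (k + 3)) x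
      ((k + 3) * (f x)⁺ ^ (k + 1) * ((k + 2) * (α * ‖p‖ ^ 2) - L * (‖H‖ + ‖p‖) * (f x)⁺)) := by
  have hderiv (y : ℝ) : HasDerivAt (fun z : ℝ => z⁺ ^ (k + 3)) ((k + 3) * y⁺ ^ (k + 2)) y := by
    refine (hasDerivAt_posPart_pow (k + 1) y).congr_deriv ?_
    push_cast
    ring
  refine ⟨_, _, hf.scomp hderiv ((hasDerivAt_posPart_pow k (f x)).const_mul _), fun A hA => ?_⟩
  set y := (f x)⁺
  have hy : 0 ≤ y := posPart_nonneg _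
  have hp := mul_le_mul_of_nonneg_left (hA.1 p)
    (by positivity : 0 ≤ ((k : ℝ) + 3) * ((k + 2) * y ^ (k + 1)))
  have hH := mul_le_mul_of_nonneg_left (neg_mul_norm_le_of_mem_ellipticClass hA H)
    (by positivity : 0 ≤ ((k : ℝ) + 3) * y ^ (k + 2))
  rw [map_add, map_smul, map_smul, norm_smul, Real.norm_of_nonneg (by positivity), smul_eq_mul,
    smul_eq_mul]
  refine le_trans (le_of_eq ?_) (sub_le_sub_right (add_le_add hH hp) _)
  ring

lemma exists_mul_le_add_mul_sq (a : ℝ) {b : ℝ} (hb : 0 < b) :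
    ∃ K, 0 ≤ K ∧ ∀ y : ℝ, a * y ≤ b + K * y ^ 2 := by
  refine ⟨a ^ 2 / (4 * b), by positivity, fun y => ?_⟩
  have hsq : b + a ^ 2 / (4 * b) * y ^ 2 - a * y = (a * y - 2 * b) ^ 2 / (4 * b) := by
    field_simp
    ring
  linarith [show 0 ≤ (a * y - 2 * b) ^ 2 / (4 * b) by positivity]

end Barriers

section StrongMaximumPrinciple

variable {E : Type*} [NormedAddCommGroup E] [InnerProductSpace ℝ E] {α : ℝ} {L : ℝ≥0}

lemma extremalGE_posPart_sub_norm_sub_sq (ρ : ℝ) (c x : E) :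
    ExtremalGE α L (fun y => (ρ ^ 2 - ‖y - c‖ ^ 2)⁺ ^ 3) x
      (3 * (ρ ^ 2 - ‖x - c‖ ^ 2)⁺ * (8 * α * ‖x - c‖ ^ 2 -
        L * (2 + 2 * ‖x - c‖) * (ρ ^ 2 - ‖x - c‖ ^ 2)⁺)) := by
  have hjet := (HasTwoJetAt.const (ρ ^ 2) x).sub (hasTwoJetAt_norm_sub_sq c x)
  refine (hjet.extremalGE_posPart_pow 0).mono ?_
  have hgrad : ‖(0 : E →L[ℝ] ℝ) - (2 : ℝ) • innerSL ℝ (x - c)‖ = 2 * ‖x - c‖ := by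
    rw [zero_sub, norm_neg, norm_smul, innerSL_apply_norm, Real.norm_of_nonneg zero_le_two]
  set H : E →L[ℝ] E →L[ℝ] ℝ := (2 : ℝ) • innerSL ℝ
  have hhess : ‖0 - H‖ ≤ 2 := by
    simp only [H]
    rw [zero_sub, norm_neg, norm_smul, Real.norm_of_nonneg zero_le_two]
    linarith [norm_innerSL_le ℝ (E := E)]
  rw [hgrad]
  set y := (ρ ^ 2 - ‖x - c‖ ^ 2)⁺
  calc 3 * y * (8 * α * ‖x - c‖ ^ 2 - L * (2 + 2 * ‖x - c‖) * y)
      ≤ 3 * y * (8 * α * ‖x - c‖ ^ 2 - L * (‖0 - H‖ + 2 * ‖x - c‖) * y) := by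
        have : 0 ≤ y := posPart_nonneg _
        gcongr
    _ = _ := by
        push_cast
        ring

/-- Near the edge of the bump the term `8α‖x - c‖²` of the preceding bound dominates, elsewhere the
decay does. -/
lemma exists_isSubsolutionAt_bump (hα : 0 < α) (x₀ V : E) (a : ℝ) {ρ : ℝ} (hρ : 0 < ρ) :
    ∃ κ, ∀ c ≥ 0, ∀ x t, IsSubsolutionAt α L (fun y s =>
      c * Real.exp (-κ * (s - a)) * (ρ ^ 2 - ‖y - (x₀ + (s - a) • V)‖ ^ 2)⁺ ^ 3) x t := by
  set C := L * (2 + 2 * ρ) + 2 * ρ * ‖V‖ + 8 * α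
  obtain ⟨K, -, hK⟩ := exists_mul_le_add_mul_sq C (by positivity : 0 < 8 * α * ρ ^ 2)
  refine ⟨3 * K + L, fun c hc x t => ?_⟩
  set z := x - (x₀ + (t - a) • V)
  have hz : HasDerivAt (fun s => ρ ^ 2 - ‖x - (x₀ + (s - a) • V)‖ ^ 2) (2 * ⟪z, V⟫) t := by
    have hline : HasDerivAt (fun s => x - (x₀ + (s - a) • V)) (-V) t := by
      simpa using ((((hasDerivAt_id t).sub_const a).smul_const V).const_add x₀).const_sub x
    simpa using hline.norm_sq.const_sub (ρ ^ 2)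
  refine isSubsolutionAt_exp_mul hc ((hasDerivAt_posPart_pow 1 _).comp t hz)
    ((extremalGE_posPart_sub_norm_sub_sq ρ _ x).mono ?_)
  rcases le_or_gt (ρ ^ 2 - ‖z‖ ^ 2) 0 with hout | hin
  · simp [z, posPart_of_nonpos hout]
  set y := ρ ^ 2 - ‖z‖ ^ 2 with hy
  have hzρ : ‖z‖ ≤ ρ := (abs_le_of_sq_le_sq' (by linarith) hρ.le).2
  have hinner : ⟪z, V⟫ ≤ ρ * ‖V‖ := (real_inner_le_norm z V).trans (by gcongr)
  have hbound : 2 * ⟪z, V⟫ * y ≤ 8 * α * ‖z‖ ^ 2 - L * (2 + 2 * ‖z‖) * y + K * y ^ 2 := by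
    have hle : L * (2 + 2 * ‖z‖) * y + 2 * ⟪z, V⟫ * y + 8 * α * y ≤ C * y := by
      rw [← add_mul, ← add_mul]
      gcongr ?_ * y
      simp only [C]
      linarith [mul_le_mul_of_nonneg_left hzρ L.coe_nonneg]
    have hz2 : ‖z‖ ^ 2 = ρ ^ 2 - y := by rw [hy]; ring
    rw [hz2]
    linarith [hK y]
  have hmul := mul_le_mul_of_nonneg_left hbound (by positivity : 0 ≤ 3 * y)
  rw [posPart_of_nonneg hin.le, abs_of_pos (by positivity)]
  push_cast
  linarith

variable [FiniteDimensional ℝ E]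

lemma pos_of_forall_ball_subset (hα : 0 < α) {K D : Set E} (hK : IsCompact K) (hD : IsOpen D)
    (hDK : D ⊆ K) {w : E → ℝ → ℝ} {a b : ℝ} (hab : a < b)
    (hw : ContinuousOn (fun z : E × ℝ => w z.1 z.2) (K ×ˢ Icc a b))
    (hnonneg : ∀ x ∈ K, ∀ t ∈ Icc a b, 0 ≤ w x t)
    (hsuper : ∀ x ∈ D, ∀ t ∈ Ioc a b, IsSupersolutionAt α L w x t) {x₀ V : E} {ρ m : ℝ}
    (hρ : 0 < ρ) (hm : 0 < m) (hinit : ∀ x ∈ ball x₀ ρ, m ≤ w x a)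
    (hball : ∀ t ∈ Icc a b, ball (x₀ + (t - a) • V) ρ ⊆ D) : 0 < w (x₀ + (b - a) • V) b := by
  obtain ⟨κ, hκ⟩ := exists_isSubsolutionAt_bump (L := L) hα x₀ V a hρ
  set c := m / (ρ ^ 2) ^ 3
  have hc : 0 < c := by positivity
  have hout {x : E} {t : ℝ} (hx : x ∉ ball (x₀ + (t - a) • V) ρ) :
      (ρ ^ 2 - ‖x - (x₀ + (t - a) • V)‖ ^ 2)⁺ = 0 := by
    rw [mem_ball, dist_eq_norm, not_lt] at hx
    exact posPart_of_nonpos (sub_nonpos.2 (by gcongr))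
  have hcenter : x₀ + (b - a) • V ∈ D :=
    hball b (right_mem_Icc.2 hab.le) (mem_ball_self hρ)
  have hle := comparison hα.le hK hD hDK hw (Continuous.continuousOn (by fun_prop))
    (fun x hx => ?_) (fun x hx t ht => ?_) hsuper (fun x _ t _ => hκ c hc.le x t) _
    (hDK hcenter) b (right_mem_Icc.2 hab.le)
  · refine lt_of_lt_of_le ?_ hle
    rw [sub_self, norm_zero, zero_pow two_ne_zero, sub_zero, posPart_of_nonneg (by positivity)]
    positivity
  · by_cases hxb : x ∈ ball x₀ ρ
    · refine le_trans ?_ (hinit x hxb)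
      rw [sub_self, mul_zero, Real.exp_zero, mul_one, ← le_div_iff₀' hc,
        div_div_cancel₀ (by positivity)]
      gcongr
      exact (posPart_mono (sub_le_self _ (by positivity))).trans_eq
        (posPart_of_nonneg (by positivity))
    · rw [hout (t := a) (by simpa using hxb)]
      simpa using hnonneg x hx a (left_mem_Icc.2 hab.le)
  · have ht' := Ioc_subset_Icc_self ht
    rw [hout fun h => hx.2 (hball t ht' h)]
    simpa using hnonneg x hx.1 t ht'

lemma pos_of_segment_subset (hα : 0 < α) {K D : Set E} (hK : IsCompact K) (hD : IsOpen D)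
    (hDK : D ⊆ K) {w : E → ℝ → ℝ} {a b : ℝ} (hab : a < b)
    (hw : ContinuousOn (fun z : E × ℝ => w z.1 z.2) (K ×ˢ Icc a b))
    (hnonneg : ∀ x ∈ K, ∀ t ∈ Icc a b, 0 ≤ w x t)
    (hsuper : ∀ x ∈ D, ∀ t ∈ Ioc a b, IsSupersolutionAt α L w x t) {x₀ y : E}
    (hseg : segment ℝ x₀ y ⊆ D) (hpos : 0 < w x₀ a) : 0 < w y b := by
  have hwa : ContinuousAt (fun x => w x a) x₀ :=
    (hw.comp (f := fun x => (x, a)) (by fun_prop) fun x hx =>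
      ⟨hx, left_mem_Icc.2 hab.le⟩).continuousAt
        (mem_of_superset (hD.mem_nhds (hseg (left_mem_segment ℝ x₀ y))) hDK)
  obtain ⟨r, hr, hwr⟩ := Metric.eventually_nhds_iff_ball.1
    (hwa.eventually (lt_mem_nhds (half_lt_self hpos)))
  have hsegc : IsCompact (segment ℝ x₀ y) := by
    rw [segment_eq_image_lineMap]
    exact isCompact_Icc.image (by fun_prop)
  obtain ⟨d, hd, hdD⟩ := hsegc.exists_thickening_subset_open hD hseg
  set V := (b - a)⁻¹ • (y - x₀)
  have hcenter : ∀ t ∈ Icc a b, x₀ + (t - a) • V ∈ segment ℝ x₀ y := fun t ht => by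
    rw [segment_eq_image']
    refine ⟨(t - a) * (b - a)⁻¹, ⟨?_, ?_⟩, by simp only [V, smul_smul]⟩
    · exact mul_nonneg (by linarith [ht.1]) (by simpa using hab.le)
    · rw [← div_eq_mul_inv, div_le_one (by linarith)]
      linarith [ht.2]
  have hend : x₀ + (b - a) • V = y := by
    simp only [V, smul_inv_smul₀ (sub_pos.2 hab).ne', add_sub_cancel]
  rw [← hend]
  refine pos_of_forall_ball_subset hα hK hD hDK hab hw hnonneg hsuper (lt_min hr hd)
    (half_pos hpos) (fun x hx => (hwr x (ball_subset_ball (min_le_left r d) hx)).le)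
    fun t ht x hx => hdD (mem_thickening_iff.2 ⟨_, hcenter t ht, ?_⟩)
  exact (mem_ball.1 hx).trans_le (min_le_right r d)

/-- Strong maximum principle. -/
theorem pos_of_isPreconnected (hα : 0 < α) {K D : Set E} (hK : IsCompact K) (hD : IsOpen D)
    (hDK : D ⊆ K) (hDconn : IsPreconnected D) {w : E → ℝ → ℝ}
    (hw : ContinuousOn (fun z : E × ℝ => w z.1 z.2) (K ×ˢ Ici 0))
    (hnonneg : ∀ x ∈ K, ∀ t, 0 ≤ t → 0 ≤ w x t)
    (hsuper : ∀ x ∈ D, ∀ t, 0 < t → IsSupersolutionAt α L w x t)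
    {x₀ y : E} (hx₀ : x₀ ∈ D) (hpos : 0 < w x₀ 0) (hy : y ∈ D) {t : ℝ} (ht : 0 < t) :
    0 < w y t := by
  have hsegment {x z : E} (hxz : segment ℝ x z ⊆ D) (a b : ℝ) (ha : 0 ≤ a) (hab : a < b)
      (hxa : 0 < w x a) : 0 < w z b :=
    pos_of_segment_subset hα hK hD hDK hab
      (hw.mono (prod_mono subset_rfl fun s hs => ha.trans hs.1))
      (fun x hx s hs => hnonneg x hx s (ha.trans hs.1))
      (fun x hx s hs => hsuper x hx s (ha.trans_lt hs.1)) hxz hxa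
  refine hDconn.induction₂' (fun x z => ∀ a b, 0 ≤ a → a < b → 0 < w x a → 0 < w z b)
    (fun x hx => ?_) (fun x z z' _ _ _ hxz hzz' a b ha hab hxa => ?_) hx₀ hy 0 t le_rfl ht hpos
  · obtain ⟨d, hd, hball⟩ := Metric.isOpen_iff.1 hD x hx
    filter_upwards [mem_nhdsWithin_of_mem_nhds (ball_mem_nhds x hd)] with z hz
    have hxz := ((convex_ball x d).segment_subset (mem_ball_self hd) hz).trans hball
    exact ⟨hsegment hxz, hsegment (segment_symm ℝ x z ▸ hxz)⟩
  · obtain ⟨s, has, hsb⟩ := exists_between hab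
    exact hzz' s b (ha.trans has.le) hsb (hxz a s ha has hxa)

end StrongMaximumPrinciple

section RadialDomains

variable {B : Set (EuclideanSpace ℝ (Fin N))} {e x : EuclideanSpace ℝ (Fin N)}

namespace IsRadialDomain

lemma isOpen (hB : IsRadialDomain B) : IsOpen B := by
  rcases hB with ⟨R, -, rfl⟩ | ⟨r, R, -, -, rfl⟩
  · exact isOpen_ball
  · exact (isOpen_lt continuous_const continuous_norm).inter
      (isOpen_lt continuous_norm continuous_const)

lemma isCompact_closure (hB : IsRadialDomain B) : IsCompact (closure B) := by
  refine Bornology.IsBounded.isCompact_closure ?_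
  rcases hB with ⟨R, -, rfl⟩ | ⟨r, R, -, -, rfl⟩
  · exact isBounded_ball
  · exact isBounded_ball.subset fun x hx => mem_ball_zero_iff.2 hx.2

lemma reflHyp_mem (hB : IsRadialDomain B) (he : ‖e‖ = 1) (hx : x ∈ B) : reflHyp e x ∈ B := by
  rcases hB with ⟨R, -, rfl⟩ | ⟨r, R, -, -, rfl⟩ <;> simpa [norm_reflHyp he] using hx

lemma reflHyp_mem_closure (hB : IsRadialDomain B) (he : ‖e‖ = 1) (hx : x ∈ closure B) :
    reflHyp e x ∈ closure B :=
  map_mem_closure (continuous_reflHyp.comp (Continuous.prodMk_right e)) hx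
    fun _ hy => hB.reflHyp_mem he hy

lemma reflHyp_mem_frontier (hB : IsRadialDomain B) (he : ‖e‖ = 1) (hx : x ∈ frontier B) :
    reflHyp e x ∈ frontier B := by
  rw [hB.isOpen.frontier_eq] at hx ⊢
  refine ⟨hB.reflHyp_mem_closure he hx.1, fun h => hx.2 ?_⟩
  simpa [reflHyp_reflHyp he] using hB.reflHyp_mem he h

end IsRadialDomain

lemma norm_pos_of_inner_pos (h : 0 < ⟪x, e⟫) : 0 < ‖x‖ := by
  rw [norm_pos_iff]
  rintro rfl
  simp at h

lemma convex_halfSpace_inner_pos (e : EuclideanSpace ℝ (Fin N)) :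
    Convex ℝ {x : EuclideanSpace ℝ (Fin N) | 0 < ⟪x, e⟫} :=
  convex_halfSpace_gt ⟨fun x y => inner_add_left x y e, fun c x => real_inner_smul_left x e c⟩ 0

lemma halfDom_annulus_eq_image {r : ℝ} (hr : 0 ≤ r) (R : ℝ) (e : EuclideanSpace ℝ (Fin N)) :
    halfDom {x : EuclideanSpace ℝ (Fin N) | r < ‖x‖ ∧ ‖x‖ < R} e =
      (fun z : ℝ × EuclideanSpace ℝ (Fin N) => (z.1 / ‖z.2‖) • z.2) ''
        (Ioo r R ×ˢ {x | 0 < ⟪x, e⟫}) := by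
  ext x
  constructor
  · rintro ⟨hnorm, hinner⟩
    exact ⟨(‖x‖, x), ⟨hnorm, hinner⟩, by simp [(norm_pos_of_inner_pos hinner).ne']⟩
  · rintro ⟨⟨ρ, v⟩, ⟨⟨hrρ, hρR⟩, hinner⟩, rfl⟩
    have hv := norm_pos_of_inner_pos hinner
    have hρ : 0 < ρ := hr.trans_lt hrρ
    have hnorm : ‖(ρ / ‖v‖) • v‖ = ρ := by
      rw [norm_smul, Real.norm_of_nonneg (by positivity), div_mul_cancel₀ _ hv.ne']
    refine ⟨⟨by rwa [hnorm], by rwa [hnorm]⟩, ?_⟩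
    rw [real_inner_smul_left]
    exact mul_pos (div_pos hρ hv) hinner

lemma IsRadialDomain.isPreconnected_halfDom (hB : IsRadialDomain B)
    (e : EuclideanSpace ℝ (Fin N)) : IsPreconnected (halfDom B e) := by
  rcases hB with ⟨R, -, rfl⟩ | ⟨r, R, hr, -, rfl⟩
  · exact ((convex_ball 0 R).inter (convex_halfSpace_inner_pos e)).isPreconnected
  · rw [halfDom_annulus_eq_image hr.le]
    refine ((convex_Ioo r R).prod (convex_halfSpace_inner_pos e)).isPreconnected.image _ ?_
    refine (ContinuousOn.div continuousOn_fst (by fun_prop) ?_).smul continuousOn_snd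
    exact fun z hz => (norm_pos_of_inner_pos hz.2).ne'

/-- The closed half domain `B̄ ∩ {x·e ≥ 0}`, on which the comparison arguments take place. -/
def closedHalfDom (B : Set (EuclideanSpace ℝ (Fin N))) (e : EuclideanSpace ℝ (Fin N)) :
    Set (EuclideanSpace ℝ (Fin N)) := {x ∈ closure B | 0 ≤ ⟪x, e⟫}

lemma halfDom_subset_closedHalfDom (B : Set (EuclideanSpace ℝ (Fin N)))
    (e : EuclideanSpace ℝ (Fin N)) : halfDom B e ⊆ closedHalfDom B e :=
  fun _ hx => ⟨subset_closure hx.1, hx.2.le⟩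

namespace IsRadialDomain

lemma isOpen_halfDom (hB : IsRadialDomain B) (e : EuclideanSpace ℝ (Fin N)) :
    IsOpen (halfDom B e) := by
  have hinner : Continuous fun x : EuclideanSpace ℝ (Fin N) => ⟪x, e⟫ := by fun_prop
  exact hB.isOpen.inter (isOpen_lt continuous_const hinner)

lemma isCompact_closedHalfDom (hB : IsRadialDomain B) (e : EuclideanSpace ℝ (Fin N)) :
    IsCompact (closedHalfDom B e) := by
  have hinner : Continuous fun x : EuclideanSpace ℝ (Fin N) => ⟪x, e⟫ := by fun_prop
  exact hB.isCompact_closure.inter_right (isClosed_le continuous_const hinner)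

lemma mem_frontier_or_inner_eq_zero (hB : IsRadialDomain B)
    (hx : x ∈ closedHalfDom B e \ halfDom B e) : x ∈ frontier B ∨ ⟪x, e⟫ = 0 := by
  rw [hB.isOpen.frontier_eq]
  by_cases hxB : x ∈ B
  · exact Or.inr (le_antisymm (not_lt.1 fun h => hx.2 ⟨hxB, h⟩) hx.1.2)
  · exact Or.inl ⟨hx.1.1, hxB⟩

end IsRadialDomain

end RadialDomains

section ReflectionDifferences

variable {B : Set (EuclideanSpace ℝ (Fin N))} {u : EuclideanSpace ℝ (Fin N) → ℝ → ℝ}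
  {α : ℝ} {L : ℝ≥0} {e x : EuclideanSpace ℝ (Fin N)} {t : ℝ}

/-- `u` is continuous on `B̄ × [0, ∞)`, vanishes on `∂B × (0, ∞)`, and all its reflection
differences are supersolutions in `B × (0, ∞)`. Nothing else about the equation is used to compare
`u` with its reflections. -/
structure HasReflSupersolutions (B : Set (EuclideanSpace ℝ (Fin N)))
    (u : EuclideanSpace ℝ (Fin N) → ℝ → ℝ) (α : ℝ) (L : ℝ≥0) : Prop where
  continuousOn : ContinuousOn (fun z : EuclideanSpace ℝ (Fin N) × ℝ => u z.1 z.2)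
    (closure B ×ˢ Ici 0)
  eq_zero_of_mem_frontier : ∀ x ∈ frontier B, ∀ t, 0 < t → u x t = 0
  isSupersolutionAt : ∀ e : EuclideanSpace ℝ (Fin N), ‖e‖ = 1 → ∀ x ∈ B, ∀ t, 0 < t →
    IsSupersolutionAt α L (reflDiff u e) x t

lemma continuousOn_reflDiff (hB : IsRadialDomain B)
    (hu : ContinuousOn (fun z : EuclideanSpace ℝ (Fin N) × ℝ => u z.1 z.2)
      (closure B ×ˢ Ici 0)) :
    ContinuousOn (fun z : EuclideanSpace ℝ (Fin N) × EuclideanSpace ℝ (Fin N) × ℝ =>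
      reflDiff u z.1 z.2.1 z.2.2) ({e | ‖e‖ = 1} ×ˢ closure B ×ˢ Ici 0) := by
  refine (hu.comp continuousOn_snd fun z hz => hz.2).sub
    (hu.comp (f := fun z : EuclideanSpace ℝ (Fin N) × EuclideanSpace ℝ (Fin N) × ℝ =>
      (reflHyp z.1 z.2.1, z.2.2)) ?_ ?_)
  · exact ((continuous_reflHyp.comp (by fun_prop :
      Continuous fun z : EuclideanSpace ℝ (Fin N) × EuclideanSpace ℝ (Fin N) × ℝ =>
        (z.1, z.2.1))).prodMk (by fun_prop)).continuousOn
  · exact fun z hz => ⟨hB.reflHyp_mem_closure hz.1 hz.2.1, hz.2.2⟩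

namespace HasReflSupersolutions

lemma continuousOn_reflDiff_right (hu : HasReflSupersolutions B u α L) (hB : IsRadialDomain B)
    (he : ‖e‖ = 1) :
    ContinuousOn (fun z : EuclideanSpace ℝ (Fin N) × ℝ => reflDiff u e z.1 z.2)
      (closedHalfDom B e ×ˢ Ici 0) :=
  (continuousOn_reflDiff hB hu.continuousOn).comp (f := fun z => (e, z)) (by fun_prop)
    fun _ hz => ⟨he, hz.1.1, hz.2⟩

lemma reflDiff_eq_zero (hu : HasReflSupersolutions B u α L) (hB : IsRadialDomain B)
    (he : ‖e‖ = 1) (hx : x ∈ closedHalfDom B e \ halfDom B e) (ht : 0 < t) :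
    reflDiff u e x t = 0 := by
  rcases hB.mem_frontier_or_inner_eq_zero hx with hfr | hperp
  · rw [reflDiff, hu.eq_zero_of_mem_frontier x hfr t ht,
      hu.eq_zero_of_mem_frontier _ (hB.reflHyp_mem_frontier he hfr) t ht, sub_zero]
  · simp [reflDiff, reflHyp, hperp]

lemma reflDiff_initial_nonneg (hu : HasReflSupersolutions B u α L) (hB : IsRadialDomain B)
    (he : ‖e‖ = 1) (hinit : ∀ x ∈ halfDom B e, 0 ≤ reflDiff u e x 0)
    (hx : x ∈ closedHalfDom B e) : 0 ≤ reflDiff u e x 0 := by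
  by_cases hxD : x ∈ halfDom B e
  · exact hinit x hxD
  · have hcont : ContinuousOn (fun s => reflDiff u e x s) (Ici 0) :=
      (hu.continuousOn_reflDiff_right hB he).comp (f := fun s => (x, s)) (by fun_prop)
        fun s hs => ⟨hx, hs⟩
    refine ge_of_tendsto ((hcont 0 self_mem_Ici).mono Ioi_subset_Ici_self) ?_
    filter_upwards [self_mem_nhdsWithin] with s hs
    exact (hu.reflDiff_eq_zero hB he ⟨hx, hxD⟩ hs).ge

lemma reflDiff_nonneg (hu : HasReflSupersolutions B u α L) (hB : IsRadialDomain B) (hα : 0 ≤ α)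
    (he : ‖e‖ = 1) (hinit : ∀ x ∈ halfDom B e, 0 ≤ reflDiff u e x 0)
    (hx : x ∈ closedHalfDom B e) (ht : 0 ≤ t) : 0 ≤ reflDiff u e x t :=
  comparison (ψ := fun _ _ => 0) hα (hB.isCompact_closedHalfDom e) (hB.isOpen_halfDom e)
    (halfDom_subset_closedHalfDom B e)
    ((hu.continuousOn_reflDiff_right hB he).mono (prod_mono subset_rfl Icc_subset_Ici_self))
    continuousOn_const (fun _ hy => hu.reflDiff_initial_nonneg hB he hinit hy)
    (fun _ hy _ hs => (hu.reflDiff_eq_zero hB he hy hs.1).ge)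
    (fun y hy s hs => hu.isSupersolutionAt e he y hy.1 s hs.1)
    (fun y _ s _ => ⟨0, hasDerivAt_const s 0, by simpa using ExtremalGE.const 0 y⟩)
    x hx t (right_mem_Icc.2 ht)

lemma reflDiff_pos (hu : HasReflSupersolutions B u α L) (hB : IsRadialDomain B) (hα : 0 < α)
    (he : ‖e‖ = 1) (hinit : ∀ x ∈ halfDom B e, 0 ≤ reflDiff u e x 0)
    (hinit' : ∃ x ∈ halfDom B e, 0 < reflDiff u e x 0) (hx : x ∈ halfDom B e) (ht : 0 < t) :
    0 < reflDiff u e x t := by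
  obtain ⟨y, hy, hpos⟩ := hinit'
  exact pos_of_isPreconnected hα (hB.isCompact_closedHalfDom e) (hB.isOpen_halfDom e)
    (halfDom_subset_closedHalfDom B e) (hB.isPreconnected_halfDom e)
    (hu.continuousOn_reflDiff_right hB he)
    (fun _ hz _ hs => hu.reflDiff_nonneg hB hα.le he hinit hz hs)
    (fun z hz s hs => hu.isSupersolutionAt e he z hz.1 s hs) hy hpos hx ht

end HasReflSupersolutions

end ReflectionDifferences

section RadialDefiningFunctions

variable {B : Set (EuclideanSpace ℝ (Fin N))}

/-- `Θ` is a radial function, positive exactly on `B`, with gradient `τ(x) x` and Hessian `Q(x)`,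
all bounded by `M` on `B̄`. The last field says quantitatively that the gradient does not vanish
where `Θ` does. -/
structure IsRadialDefiningFunction (B : Set (EuclideanSpace ℝ (Fin N)))
    (Θ τ : EuclideanSpace ℝ (Fin N) → ℝ)
    (Q : EuclideanSpace ℝ (Fin N) →
      EuclideanSpace ℝ (Fin N) →L[ℝ] EuclideanSpace ℝ (Fin N) →L[ℝ] ℝ)
    (c M : ℝ) : Prop where
  c_pos : 0 < c
  one_le : 1 ≤ M
  continuous : Continuous Θ
  mem_iff : ∀ x, x ∈ B ↔ 0 < Θ x
  hasTwoJetAt : ∀ x, HasTwoJetAt Θ (τ x • innerSL ℝ x) (Q x) x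
  le : ∀ x ∈ closure B, Θ x ≤ M
  norm_le : ∀ x ∈ closure B, ‖x‖ ≤ M
  abs_coeff_le : ∀ x ∈ closure B, |τ x| ≤ M
  norm_hess_le : ∀ x ∈ closure B, ‖Q x‖ ≤ M
  nondegenerate : ∀ x ∈ closure B, c ≤ τ x ^ 2 * ‖x‖ ^ 2 + Θ x

lemma exists_isRadialDefiningFunction_comp_norm_sq (hB : IsCompact (closure B)) {φ φ' : ℝ → ℝ}
    {φ'' : ℝ} (hφ : ∀ y, HasDerivAt φ (φ' y) y) (hφ' : ∀ y, HasDerivAt φ' φ'' y)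
    (hmem : ∀ x, x ∈ B ↔ 0 < φ (‖x‖ ^ 2))
    (hnondeg : ∀ x ∈ closure B, 0 < (2 * φ' (‖x‖ ^ 2)) ^ 2 * ‖x‖ ^ 2 + φ (‖x‖ ^ 2)) :
    ∃ Θ τ Q c M, IsRadialDefiningFunction B Θ τ Q c M := by
  set Θ : EuclideanSpace ℝ (Fin N) → ℝ := fun x => φ (‖x‖ ^ 2)
  set τ : EuclideanSpace ℝ (Fin N) → ℝ := fun x => 2 * φ' (‖x‖ ^ 2)
  set H₀ : EuclideanSpace ℝ (Fin N) →L[ℝ] EuclideanSpace ℝ (Fin N) →L[ℝ] ℝ :=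
    (2 : ℝ) • innerSL ℝ
  set Q : EuclideanSpace ℝ (Fin N) → EuclideanSpace ℝ (Fin N) →L[ℝ]
      EuclideanSpace ℝ (Fin N) →L[ℝ] ℝ :=
    fun x => φ' (‖x‖ ^ 2) • H₀ + φ'' • (H₀ x).smulRight (H₀ x)
  have hφc : Continuous φ := continuous_iff_continuousAt.2 fun y => (hφ y).continuousAt
  have hφ'c : Continuous φ' := continuous_iff_continuousAt.2 fun y => (hφ' y).continuousAt
  have hΘc : Continuous Θ := by fun_prop
  have hτc : Continuous τ := by fun_prop
  have hQc : Continuous Q := by fun_prop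
  have hjet (x) : HasTwoJetAt Θ (τ x • innerSL ℝ x) (Q x) x := by
    have hnorm : HasTwoJetAt (fun y => ‖y‖ ^ 2) (H₀ x) H₀ x := by
      have h := hasTwoJetAt_norm_sub_sq (0 : EuclideanSpace ℝ (Fin N)) x
      simp only [sub_zero] at h
      exact h
    have hgrad : τ x • innerSL ℝ x = φ' (‖x‖ ^ 2) • H₀ x := by
      ext a
      simp only [τ, H₀, smul_apply, smul_eq_mul]
      ring
    rw [hgrad]
    exact hnorm.scomp hφ (hφ' _)
  obtain ⟨C, hC⟩ := hB.exists_bound_of_continuousOn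
    (f := fun x => (Θ x, x, τ x, Q x)) (by fun_prop)
  simp only [Prod.norm_mk, max_le_iff, Real.norm_eq_abs] at hC
  obtain ⟨c, hc, hcle⟩ := hB.exists_forall_le' (f := fun x => τ x ^ 2 * ‖x‖ ^ 2 + Θ x)
    (by fun_prop) hnondeg
  have hCM : C ≤ max 1 C := le_max_right 1 C
  exact ⟨Θ, τ, Q, c, max 1 C, hc, le_max_left 1 C, hΘc, hmem, hjet,
    fun x hx => (le_abs_self _).trans ((hC x hx).1.trans hCM),
    fun x hx => (hC x hx).2.1.trans hCM, fun x hx => (hC x hx).2.2.1.trans hCM,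
    fun x hx => (hC x hx).2.2.2.trans hCM, hcle⟩

lemma exists_isRadialDefiningFunction_ball {R : ℝ} (hR : 0 < R) :
    ∃ Θ τ Q c M,
      IsRadialDefiningFunction (ball (0 : EuclideanSpace ℝ (Fin N)) R) Θ τ Q c M := by
  refine exists_isRadialDefiningFunction_comp_norm_sq isBounded_ball.isCompact_closure
    (φ := fun y => R ^ 2 - y) (φ' := fun _ => -1) (φ'' := 0)
    (fun y => (hasDerivAt_id y).const_sub _) (fun y => hasDerivAt_const y _) (fun x => ?_)
    fun x _ => ?_
  · rw [mem_ball_zero_iff, sub_pos, sq_lt_sq₀ (norm_nonneg x) hR.le]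
  · nlinarith [sq_nonneg ‖x‖]

lemma exists_isRadialDefiningFunction_annulus {r R : ℝ} (hr : 0 < r) (hrR : r < R) :
    ∃ Θ τ Q c M, IsRadialDefiningFunction
      {x : EuclideanSpace ℝ (Fin N) | r < ‖x‖ ∧ ‖x‖ < R} Θ τ Q c M := by
  have hR : 0 < R := hr.trans hrR
  have hrR2 : r ^ 2 < R ^ 2 := by gcongr
  have hclosure : closure {x : EuclideanSpace ℝ (Fin N) | r < ‖x‖ ∧ ‖x‖ < R} ⊆
      {x | r ≤ ‖x‖ ∧ ‖x‖ ≤ R} :=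
    closure_minimal (fun x hx => ⟨hx.1.le, hx.2.le⟩)
      ((isClosed_le continuous_const continuous_norm).inter
        (isClosed_le continuous_norm continuous_const))
  refine exists_isRadialDefiningFunction_comp_norm_sq
    (IsRadialDomain.isCompact_closure (.inr ⟨r, R, hr, hrR, rfl⟩))
    (φ := fun y => (R ^ 2 - y) * (y - r ^ 2)) (φ' := fun y => R ^ 2 + r ^ 2 - 2 * y) (φ'' := -2)
    (fun y => ?_) (fun y => ?_) (fun x => ?_) fun x hx => ?_
  · refine (((hasDerivAt_id y).const_sub (R ^ 2)).mul
      ((hasDerivAt_id y).sub_const (r ^ 2))).congr_deriv ?_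
    simp only [id]
    ring
  · simpa using ((hasDerivAt_id y).const_mul 2).const_sub (R ^ 2 + r ^ 2)
  · rw [mem_ofPred_eq, ← sq_lt_sq₀ hr.le (norm_nonneg x), ← sq_lt_sq₀ (norm_nonneg x) hR.le]
    refine ⟨fun h => mul_pos (sub_pos.2 h.2) (sub_pos.2 h.1), fun h => ?_⟩
    rcases pos_and_pos_or_neg_and_neg_of_mul_pos h with ⟨h₁, h₂⟩ | ⟨h₁, h₂⟩
    · exact ⟨sub_pos.1 h₂, sub_pos.1 h₁⟩
    · linarith
  · obtain ⟨hrx, hxR⟩ := hclosure hx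
    have hrx2 : r ^ 2 ≤ ‖x‖ ^ 2 := by gcongr
    have hxR2 : ‖x‖ ^ 2 ≤ R ^ 2 := by gcongr
    have hφ : 0 ≤ (R ^ 2 - ‖x‖ ^ 2) * (‖x‖ ^ 2 - r ^ 2) :=
      mul_nonneg (sub_nonneg.2 hxR2) (sub_nonneg.2 hrx2)
    rcases hφ.eq_or_lt with hzero | hpos
    · have hsq : (2 * (R ^ 2 + r ^ 2 - 2 * ‖x‖ ^ 2)) ^ 2 = 4 * (R ^ 2 - r ^ 2) ^ 2 := by
        linear_combination 16 * hzero
      have := sub_pos.2 hrR2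
      have hx : 0 < ‖x‖ := hr.trans_le hrx
      rw [← hzero, hsq]
      positivity
    · positivity

lemma IsRadialDomain.exists_isRadialDefiningFunction (hB : IsRadialDomain B) :
    ∃ Θ τ Q c M, IsRadialDefiningFunction B Θ τ Q c M := by
  rcases hB with ⟨R, hR, rfl⟩ | ⟨r, R, hr, hrR, rfl⟩
  · exact exists_isRadialDefiningFunction_ball hR
  · exact exists_isRadialDefiningFunction_annulus hr hrR

variable {Θ τ : EuclideanSpace ℝ (Fin N) → ℝ}
  {Q : EuclideanSpace ℝ (Fin N) →
    EuclideanSpace ℝ (Fin N) →L[ℝ] EuclideanSpace ℝ (Fin N) →L[ℝ] ℝ}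
  {c M : ℝ} {e x : EuclideanSpace ℝ (Fin N)}

namespace IsRadialDefiningFunction

lemma nonneg (hΘ : IsRadialDefiningFunction B Θ τ Q c M) (hx : x ∈ closure B) : 0 ≤ Θ x :=
  closure_minimal (fun y hy => ((hΘ.mem_iff y).1 hy).le)
    (isClosed_le continuous_const hΘ.continuous) hx

lemma inner_le (hΘ : IsRadialDefiningFunction B Θ τ Q c M) (he : ‖e‖ = 1) (hx : x ∈ closure B) :
    ⟪x, e⟫ ≤ M :=
  (real_inner_le_norm x e).trans (by simpa [he] using hΘ.norm_le x hx)

lemma inner_mul_le (hΘ : IsRadialDefiningFunction B Θ τ Q c M) (he : ‖e‖ = 1)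
    (hx : x ∈ closure B) : ⟪x, e⟫ * Θ x ≤ M * M := by
  have hM : 0 ≤ M := zero_le_one.trans hΘ.one_le
  exact mul_le_mul (hΘ.inner_le he hx) (hΘ.le x hx) (hΘ.nonneg hx) hM

lemma norm_grad_le (hΘ : IsRadialDefiningFunction B Θ τ Q c M) (hx : x ∈ closure B) :
    ‖τ x • innerSL ℝ x‖ ≤ M * M := by
  have hM : 0 ≤ M := zero_le_one.trans hΘ.one_le
  rw [norm_smul, innerSL_apply_norm]
  exact mul_le_mul (hΘ.abs_coeff_le x hx) (hΘ.norm_le x hx) (norm_nonneg x) hM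

end IsRadialDefiningFunction

end RadialDefiningFunctions

section DirectionBarriers

section Powers

variable {E : Type*} [NormedAddCommGroup E] [NormedSpace ℝ E] {α : ℝ} {L : ℝ≥0}
  {f : E → ℝ} {p : E →L[ℝ] ℝ} {H : E →L[ℝ] E →L[ℝ] ℝ} {x : E}

lemma HasTwoJetAt.extremalGE_boundaryLayer (hf : HasTwoJetAt f p H x) (hα : 0 ≤ α)
    {m C δ : ℝ} (hδ : 0 < δ) (hfx : 0 ≤ f x) (hp : f x < δ → m ≤ ‖p‖ ^ 2) (hC : ‖H‖ + ‖p‖ ≤ C)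
    (hδm : L * C * δ ≤ α * m) :
    ExtremalGE α L (fun y => (1 - f y / δ)⁺ ^ 3) x (3 * (α * m / δ ^ 2) * (1 - f x / δ)⁺) := by
  have hjet : HasTwoJetAt (fun y => 1 - f y / δ) (0 - δ⁻¹ • p) (0 - δ⁻¹ • H) x := by
    simpa only [div_eq_inv_mul] using (HasTwoJetAt.const 1 x).sub (hf.const_mul δ⁻¹)
  refine (hjet.extremalGE_posPart_pow 0).mono ?_
  simp only [zero_sub, norm_neg, norm_smul, Real.norm_of_nonneg (inv_nonneg.2 hδ.le)]
  rcases le_or_gt δ (f x) with hle | hlt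
  · rw [posPart_of_nonpos (sub_nonpos.2 ((one_le_div hδ).2 hle))]
    simp
  have hy₀ : 0 ≤ (1 - f x / δ)⁺ := posPart_nonneg _
  have hy₁ : (1 - f x / δ)⁺ ≤ 1 := by
    rw [posPart_of_nonneg (sub_nonneg.2 ((div_le_one hδ).2 hlt.le))]
    linarith [div_nonneg hfx hδ.le]
  have hgrad : α * m / δ ^ 2 ≤ α * (δ⁻¹ * ‖p‖) ^ 2 := by
    rw [mul_pow, inv_pow, mul_left_comm, div_eq_inv_mul]
    gcongr
    exact hp hlt
  have hlower : L * (δ⁻¹ * ‖H‖ + δ⁻¹ * ‖p‖) * (1 - f x / δ)⁺ ≤ α * m / δ ^ 2 := calc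
    _ ≤ L * (δ⁻¹ * ‖H‖ + δ⁻¹ * ‖p‖) * 1 := by gcongr
    _ = δ⁻¹ * (L * (‖H‖ + ‖p‖)) := by ring
    _ ≤ δ⁻¹ * (L * C) := by gcongr
    _ = L * C * δ / δ ^ 2 := by field_simp
    _ ≤ α * m / δ ^ 2 := by gcongr
  push_cast
  linarith [mul_le_mul_of_nonneg_left hgrad hy₀, mul_le_mul_of_nonneg_left hlower hy₀]

lemma HasTwoJetAt.extremalGE_posPart_sub_pow (hf : HasTwoJetAt f p H x) (hα : 0 ≤ α)
    {c C K s : ℝ} {k : ℕ} (hK : 0 ≤ K) (hs₀ : 0 ≤ s) (hs : 2 * K * s ≤ c)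
    (hC : L * (‖H‖ + ‖p‖) ≤ C) (hk : C ≤ k * (α * c)) (hp : c * f x - K * f x ^ 2 ≤ ‖p‖ ^ 2) :
    ExtremalGE α L (fun y => (f y - s)⁺ ^ (k + 3)) x
      (-((k + 3) * (2 * (k + 2) * (α * K))) * (f x - s)⁺ ^ (k + 3)) := by
  have hjet : HasTwoJetAt (fun y => f y - s) (p - 0) (H - 0) x := hf.sub (.const s x)
  refine (hjet.extremalGE_posPart_pow k).mono ?_
  rw [sub_zero, sub_zero]
  rcases le_or_gt (f x) s with hle | hlt
  · simp [posPart_of_nonpos (sub_nonpos.2 hle)]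
  rw [posPart_of_nonneg (sub_nonneg.2 hlt.le)]
  set y := f x - s with hy
  have hy₀ : 0 ≤ y := sub_nonneg.2 hlt.le
  have hgrad : c * y - 2 * K * y ^ 2 ≤ ‖p‖ ^ 2 := by
    rw [show f x = y + s by rw [hy, sub_add_cancel]] at hp
    nlinarith [mul_nonneg hK (sq_nonneg (y - s)), mul_le_mul_of_nonneg_right hs hs₀]
  have hbracket : -(2 * (k + 2) * (α * K)) * y ^ 2 ≤
      (k + 2) * (α * ‖p‖ ^ 2) - L * (‖H‖ + ‖p‖) * y := by
    have hfirst := mul_le_mul_of_nonneg_right (hC.trans hk) hy₀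
    have hsecond := mul_le_mul_of_nonneg_left hgrad (by positivity : 0 ≤ ((k : ℝ) + 2) * α)
    have hc : 0 ≤ α * (c * y) :=
      mul_nonneg hα (mul_nonneg ((by positivity : 0 ≤ 2 * K * s).trans hs) hy₀)
    linarith
  calc
    _ = (k + 3) * y ^ (k + 1) * (-(2 * (k + 2) * (α * K)) * y ^ 2) := by ring
    _ ≤ _ := by gcongr

end Powers

variable {B : Set (EuclideanSpace ℝ (Fin N))} {Θ τ : EuclideanSpace ℝ (Fin N) → ℝ}
  {Q : EuclideanSpace ℝ (Fin N) →
    EuclideanSpace ℝ (Fin N) →L[ℝ] EuclideanSpace ℝ (Fin N) →L[ℝ] ℝ}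
  {c M α : ℝ} {L : ℝ≥0} {e x : EuclideanSpace ℝ (Fin N)}

lemma hasTwoJetAt_inner (e x : EuclideanSpace ℝ (Fin N)) :
    HasTwoJetAt (fun y => ⟪y, e⟫) (innerSL ℝ e) 0 x := by
  have hfun : (fun y => ⟪y, e⟫) = innerSL ℝ e := funext fun y => real_inner_comm e y
  exact hfun ▸ .clm (innerSL ℝ e) x

namespace IsRadialDefiningFunction

lemma exists_le_norm_grad_sq (hΘ : IsRadialDefiningFunction B Θ τ Q c M) :
    ∃ c₁ K, 0 < c₁ ∧ 0 ≤ K ∧ ∀ e : EuclideanSpace ℝ (Fin N), ‖e‖ = 1 → ∀ x ∈ closedHalfDom B e,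
      c₁ * (⟪x, e⟫ * Θ x) - K * (⟪x, e⟫ * Θ x) ^ 2 ≤
        ‖⟪x, e⟫ • τ x • innerSL ℝ x + Θ x • innerSL ℝ e‖ ^ 2 := by
  have hc := hΘ.c_pos
  obtain ⟨K, hK, hKle⟩ := exists_mul_le_add_mul_sq (1 + 2 * M) (half_pos hc)
  refine ⟨min (c / 2) 1, K, lt_min (half_pos hc) one_pos, hK, fun e he x hx => ?_⟩
  have hΘ₀ := hΘ.nonneg hx.1
  have hexpand : ‖⟪x, e⟫ • τ x • innerSL ℝ x + Θ x • innerSL ℝ e‖ ^ 2 =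
      ⟪x, e⟫ ^ 2 * (τ x ^ 2 * ‖x‖ ^ 2) + 2 * τ x * ⟪x, e⟫ ^ 2 * Θ x + Θ x ^ 2 := by
    rw [← map_smul, ← map_smul, ← map_smul, ← map_add, innerSL_apply_norm, norm_add_sq_real]
    simp only [norm_smul, mul_pow, Real.norm_eq_abs, sq_abs, real_inner_smul_left,
      real_inner_smul_right, he]
    ring
  rw [hexpand]
  set b := ⟪x, e⟫
  have hnondeg := mul_le_mul_of_nonneg_left (hΘ.nondegenerate x hx.1) (sq_nonneg b)
  have hmixed := mul_le_mul_of_nonneg_left (hKle (Θ x)) (sq_nonneg b)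
  have hτ := mul_le_mul_of_nonneg_left (abs_le.1 (hΘ.abs_coeff_le x hx.1)).1
    (mul_nonneg (sq_nonneg b) hΘ₀)
  have hb := mul_le_mul_of_nonneg_right (min_le_left (c / 2) 1) (sq_nonneg b)
  have hsq := mul_le_mul_of_nonneg_right (min_le_right (c / 2) 1) (sq_nonneg (Θ x))
  have hprod := mul_nonneg (lt_min (half_pos hc) one_pos).le (sq_nonneg (b - Θ x))
  have hpos := mul_nonneg (lt_min (half_pos hc) one_pos).le (mul_nonneg hx.2 hΘ₀)
  linarith

lemma norm_hess_add_norm_grad_inner_mul_le (hΘ : IsRadialDefiningFunction B Θ τ Q c M)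
    (he : ‖e‖ = 1) (hx : x ∈ closedHalfDom B e) :
    ‖⟪x, e⟫ • Q x + Θ x • (0 : EuclideanSpace ℝ (Fin N) →L[ℝ] EuclideanSpace ℝ (Fin N) →L[ℝ] ℝ) +
        ((innerSL ℝ e).smulRight (τ x • innerSL ℝ x) +
          (τ x • innerSL ℝ x).smulRight (innerSL ℝ e))‖ +
      ‖⟪x, e⟫ • τ x • innerSL ℝ x + Θ x • innerSL ℝ e‖ ≤ 3 * (M * M) + (M * (M * M) + M) := by
  have hM : 0 ≤ M := zero_le_one.trans hΘ.one_le
  have hb : ‖⟪x, e⟫‖ ≤ M := by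
    rw [Real.norm_of_nonneg hx.2]
    exact hΘ.inner_le he hx.1
  have hgrad := hΘ.norm_grad_le hx.1
  have hQ : ‖⟪x, e⟫ • Q x‖ ≤ M * M := by
    rw [norm_smul]
    exact mul_le_mul hb (hΘ.norm_hess_le x hx.1) (norm_nonneg _) hM
  have hp : ‖⟪x, e⟫ • τ x • innerSL ℝ x‖ ≤ M * (M * M) := by
    rw [norm_smul]
    exact mul_le_mul hb hgrad (norm_nonneg _) hM
  have hΘe : ‖Θ x • innerSL ℝ e‖ ≤ M := by
    rw [norm_smul, innerSL_apply_norm, he, mul_one, Real.norm_of_nonneg (hΘ.nonneg hx.1)]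
    exact hΘ.le x hx.1
  rw [smul_zero, add_zero]
  refine add_le_add ((norm_add_le _ _).trans ?_) (norm_add_le_of_le hp hΘe)
  refine (add_le_add hQ (norm_add_le _ _)).trans ?_
  rw [ContinuousLinearMap.norm_smulRight_apply, ContinuousLinearMap.norm_smulRight_apply,
    innerSL_apply_norm, he]
  linarith

lemma exists_extremalGE_pow (hΘ : IsRadialDefiningFunction B Θ τ Q c M) (hα : 0 < α) (L : ℝ≥0) :
    ∃ (k : ℕ) (κ s₀ : ℝ), 0 ≤ κ ∧ 0 < s₀ ∧ ∀ e : EuclideanSpace ℝ (Fin N), ‖e‖ = 1 →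
      ∀ x ∈ closedHalfDom B e, ∀ s ∈ Icc 0 s₀,
        ExtremalGE α L (fun y => (⟪y, e⟫ * Θ y - s)⁺ ^ (k + 3)) x
          (-κ * (⟪x, e⟫ * Θ x - s)⁺ ^ (k + 3)) := by
  obtain ⟨c₁, K, hc₁, hK, hgrad⟩ := hΘ.exists_le_norm_grad_sq
  obtain ⟨k, hk⟩ := exists_nat_ge (L * (3 * (M * M) + (M * (M * M) + M)) / (α * c₁))
  refine ⟨k, (k + 3) * (2 * (k + 2) * (α * K)), c₁ / (2 * (K + 1)), by positivity, by positivity,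
    fun e he x hx s hs => ?_⟩
  have hsc : 2 * K * s ≤ c₁ := by
    have h := (le_div_iff₀ (by positivity)).1 hs.2
    linarith [hs.1]
  exact ((hasTwoJetAt_inner e x).mul (hΘ.hasTwoJetAt x)).extremalGE_posPart_sub_pow hα.le hK hs.1
    hsc (mul_le_mul_of_nonneg_left (hΘ.norm_hess_add_norm_grad_inner_mul_le he hx) L.coe_nonneg)
    ((div_le_iff₀ (by positivity)).1 hk) (hgrad e he x hx)

lemma exists_eventually_extremalGE_boundaryLayers (hΘ : IsRadialDefiningFunction B Θ τ Q c M)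
    (hα : 0 < α) (L : ℝ≥0) :
    ∃ m, 0 < m ∧ ∀ᶠ δ in 𝓝[>] (0 : ℝ), ∀ e : EuclideanSpace ℝ (Fin N), ‖e‖ = 1 →
      ∀ x ∈ closedHalfDom B e,
        ExtremalGE α L (fun y => (1 - ⟪y, e⟫ / δ)⁺ ^ 3 + (1 - Θ y / δ)⁺ ^ 3) x
          (m / δ ^ 2 * ((1 - ⟪x, e⟫ / δ)⁺ + (1 - Θ x / δ)⁺)) := by
  have hc := hΘ.c_pos
  have hM := hΘ.one_le
  set m := min 1 (c / 2)
  have hm : 0 < m := lt_min one_pos (half_pos hc)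
  have hsmall : ∀ᶠ δ in 𝓝[>] (0 : ℝ), L * (M + M * M) * δ < α * m :=
    (((continuous_const_mul _).tendsto' 0 0 (mul_zero _)).eventually_lt_const
      (by positivity)).filter_mono nhdsWithin_le_nhds
  refine ⟨3 * (α * m), by positivity, ?_⟩
  filter_upwards [hsmall, self_mem_nhdsWithin,
    eventually_nhdsWithin_of_eventually_nhds (eventually_le_nhds (half_pos hc))]
    with δ hδm hδ hδc e he x hx
  have hδ : 0 < δ := hδ
  have hinner := (hasTwoJetAt_inner e x).extremalGE_boundaryLayer hα.le hδ hx.2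
    (m := m) (C := M + M * M) (fun _ => by simp [m, innerSL_apply_norm, he])
    (by rw [norm_zero, zero_add, innerSL_apply_norm, he]; nlinarith) hδm.le
  have hradial := (hΘ.hasTwoJetAt x).extremalGE_boundaryLayer hα.le hδ (hΘ.nonneg hx.1)
    (m := m) (C := M + M * M) (fun h => by
      rw [norm_smul, innerSL_apply_norm, mul_pow, Real.norm_eq_abs, sq_abs]
      linarith [hΘ.nondegenerate x hx.1, min_le_right 1 (c / 2)])
    (add_le_add (hΘ.norm_hess_le x hx.1) (hΘ.norm_grad_le hx.1)) hδm.le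
  exact (hinner.add hradial).mono (le_of_eq (by ring))

end IsRadialDefiningFunction

/-- A barrier for the direction `e`, with constants that do not depend on `e`: on the closed half
domain `e^{-κt} Ψ(x)` is a subsolution, and `Ψ` is negative within the layer `(x·e) Θ(x) ≤ s` along
the boundary. -/
structure IsDirectionBarrier (B : Set (EuclideanSpace ℝ (Fin N)))
    (Θ : EuclideanSpace ℝ (Fin N) → ℝ) (α : ℝ) (L : ℝ≥0) (κ s C : ℝ)
    (e : EuclideanSpace ℝ (Fin N)) (Ψ : EuclideanSpace ℝ (Fin N) → ℝ) : Prop where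
  continuous : Continuous Ψ
  ge : ∀ x, -3 ≤ Ψ x
  le : ∀ x ∈ closedHalfDom B e, Ψ x ≤ C
  le_of_layer : ∀ x ∈ closedHalfDom B e, ⟪x, e⟫ * Θ x ≤ s → Ψ x ≤ -1
  extremalGE : ∀ x ∈ closedHalfDom B e, ExtremalGE α L Ψ x (-κ * Ψ x + L * |Ψ x|)

/-- The positive part pushes the interior up; the two boundary layers, along `{x·e = 0}` and along
`∂B`, absorb the constant `-3`. -/
def directionBarrier (Θ : EuclideanSpace ℝ (Fin N) → ℝ) (e : EuclideanSpace ℝ (Fin N))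
    (Λ s δ : ℝ) (k : ℕ) (x : EuclideanSpace ℝ (Fin N)) : ℝ :=
  Λ * (⟪x, e⟫ * Θ x - s)⁺ ^ (k + 3) + ((1 - ⟪x, e⟫ / δ)⁺ ^ 3 + (1 - Θ x / δ)⁺ ^ 3) + -3

lemma posPart_one_sub_div_pow_le_one {y δ : ℝ} (hδ : 0 < δ) (hy : 0 ≤ y) :
    (1 - y / δ)⁺ ^ 3 ≤ 1 :=
  pow_le_one₀ (posPart_nonneg _)
    (max_le (sub_le_self 1 (div_nonneg hy hδ.le)) zero_le_one)

lemma half_le_posPart_one_sub_div {y δ : ℝ} (hδ : 0 < δ) (hy : y ≤ δ / 2) :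
    1 / 2 ≤ (1 - y / δ)⁺ := by
  have h : y / δ ≤ 1 / 2 := (div_le_iff₀ hδ).2 (by linarith)
  exact le_trans (by linarith) (le_posPart _)

lemma le_add_boundaryLayers {b θ δ X A φ : ℝ} (hδ : 0 < δ) (hX : 2 * A ≤ X) (hA : 0 ≤ A)
    (hφ₀ : 0 ≤ φ) (hφ : 2 * (δ ^ 2 / 8) ≤ b * θ → A ≤ φ) :
    A ≤ φ + X * ((1 - b / δ)⁺ + (1 - θ / δ)⁺) := by
  have hX₀ : 0 ≤ X := (by positivity : 0 ≤ 2 * A).trans hX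
  have hb₀ := mul_nonneg hX₀ (posPart_nonneg (1 - b / δ))
  have hθ₀ := mul_nonneg hX₀ (posPart_nonneg (1 - θ / δ))
  rcases le_total b (δ / 2) with hb | hb
  · linarith [mul_le_mul_of_nonneg_left (half_le_posPart_one_sub_div hδ hb) hX₀]
  rcases le_total θ (δ / 2) with hθ | hθ
  · linarith [mul_le_mul_of_nonneg_left (half_le_posPart_one_sub_div hδ hθ) hX₀]
  have hprod : 2 * (δ ^ 2 / 8) ≤ b * θ := calc
    2 * (δ ^ 2 / 8) = δ / 2 * (δ / 2) := by ring
    _ ≤ b * θ := mul_le_mul hb hθ (half_pos hδ).le ((half_pos hδ).le.trans hb)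
  linarith [hφ hprod]

lemma extremalGE_directionBarrier {κ Λ s δ X : ℝ} {k : ℕ} (hδ : 0 < δ) (hκ : 0 ≤ κ) (hΛ : 0 ≤ Λ)
    (hs : 0 ≤ s) (hsδ : s = δ ^ 2 / 8) (hX : 2 * (3 * (κ + 1 + L + L)) ≤ X)
    (hΛs : 3 * (κ + 1 + L + L) ≤ Λ * s ^ (k + 3))
    (hpow : ExtremalGE α L (fun y => (⟪y, e⟫ * Θ y - s)⁺ ^ (k + 3)) x
      (-κ * (⟪x, e⟫ * Θ x - s)⁺ ^ (k + 3)))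
    (hlayers : ExtremalGE α L (fun y => (1 - ⟪y, e⟫ / δ)⁺ ^ 3 + (1 - Θ y / δ)⁺ ^ 3) x
      (X * ((1 - ⟪x, e⟫ / δ)⁺ + (1 - Θ x / δ)⁺))) :
    ExtremalGE α L (directionBarrier Θ e Λ s δ k) x
      (-(κ + 1 + L) * directionBarrier Θ e Λ s δ k x +
        L * |directionBarrier Θ e Λ s δ k x|) := by
  refine (((hpow.const_mul hΛ).add hlayers).add (.const (-3) x)).mono ?_
  set φ := (⟪x, e⟫ * Θ x - s)⁺ ^ (k + 3)
  have hφ : 0 ≤ φ := pow_nonneg (posPart_nonneg _) _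
  have hgain : 3 * (κ + 1 + L + L) ≤
      Λ * φ + X * ((1 - ⟪x, e⟫ / δ)⁺ + (1 - Θ x / δ)⁺) := by
    refine le_add_boundaryLayers hδ hX (by positivity) (by positivity) fun h => ?_
    refine hΛs.trans (mul_le_mul_of_nonneg_left ?_ hΛ)
    exact pow_le_pow_left₀ hs (le_trans (by linarith) (le_posPart _)) _
  set ℓ := (1 - ⟪x, e⟫ / δ)⁺ ^ 3 + (1 - Θ x / δ)⁺ ^ 3
  have hℓ : 0 ≤ ℓ := add_nonneg (pow_nonneg (posPart_nonneg _) _) (pow_nonneg (posPart_nonneg _) _)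
  have hvalue : directionBarrier Θ e Λ s δ k x = Λ * φ + ℓ + -3 := rfl
  have habs : |Λ * φ + ℓ + -3| ≤ Λ * φ + ℓ + 3 :=
    abs_le.2 ⟨by linarith [mul_nonneg hΛ hφ], by linarith⟩
  rw [hvalue]
  nlinarith [mul_le_mul_of_nonneg_left habs L.coe_nonneg, mul_nonneg hκ hℓ]

namespace IsRadialDefiningFunction

lemma isDirectionBarrier (hΘ : IsRadialDefiningFunction B Θ τ Q c M) {κ Λ s δ : ℝ} {k : ℕ}
    (he : ‖e‖ = 1) (hδ : 0 < δ) (hΛ : 0 ≤ Λ) (hs : 0 ≤ s)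
    (hextremal : ∀ x ∈ closedHalfDom B e, ExtremalGE α L (directionBarrier Θ e Λ s δ k) x
      (-κ * directionBarrier Θ e Λ s δ k x + L * |directionBarrier Θ e Λ s δ k x|)) :
    IsDirectionBarrier B Θ α L κ s (Λ * (M * M) ^ (k + 3)) e (directionBarrier Θ e Λ s δ k) := by
  have hlayers : ∀ x ∈ closedHalfDom B e,
      (1 - ⟪x, e⟫ / δ)⁺ ^ 3 + (1 - Θ x / δ)⁺ ^ 3 ≤ 2 := fun x hx => by
    linarith [posPart_one_sub_div_pow_le_one hδ hx.2,
      posPart_one_sub_div_pow_le_one hδ (hΘ.nonneg hx.1)]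
  refine ⟨?_, fun x => ?_, fun x hx => ?_, fun x hx hxs => ?_, hextremal⟩
  · have := hΘ.continuous
    unfold directionBarrier
    simp only [posPart_def]
    fun_prop
  · have hΛφ := mul_nonneg hΛ (pow_nonneg (posPart_nonneg (⟪x, e⟫ * Θ x - s)) (k + 3))
    have hℓ := add_nonneg (pow_nonneg (posPart_nonneg (1 - ⟪x, e⟫ / δ)) 3)
      (pow_nonneg (posPart_nonneg (1 - Θ x / δ)) 3)
    unfold directionBarrier
    linarith
  · have hφ : (⟪x, e⟫ * Θ x - s)⁺ ≤ M * M :=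
      max_le (by linarith [hΘ.inner_mul_le he hx.1]) (mul_self_nonneg M)
    have hΛφ := mul_le_mul_of_nonneg_left (pow_le_pow_left₀ (posPart_nonneg _) hφ (k + 3)) hΛ
    unfold directionBarrier
    linarith [hlayers x hx]
  · rw [directionBarrier, posPart_of_nonpos (sub_nonpos.2 hxs), zero_pow (by omega), mul_zero]
    linarith [hlayers x hx]

lemma exists_isDirectionBarrier (hΘ : IsRadialDefiningFunction B Θ τ Q c M) (hα : 0 < α)
    (L : ℝ≥0) :
    ∃ κ s C, 0 < κ ∧ 0 < s ∧ 0 < C ∧ ∀ e : EuclideanSpace ℝ (Fin N), ‖e‖ = 1 →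
      ∃ Ψ, IsDirectionBarrier B Θ α L κ s C e Ψ := by
  obtain ⟨k, κ, s₀, hκ, hs₀, hpow⟩ := hΘ.exists_extremalGE_pow hα L
  obtain ⟨m, hm, hlayers⟩ := hΘ.exists_eventually_extremalGE_boundaryLayers hα L
  have hM := zero_lt_one.trans_le hΘ.one_le
  have hsq : Tendsto (fun δ : ℝ => δ ^ 2) (𝓝[>] 0) (𝓝 0) :=
    ((continuous_pow 2).tendsto' 0 0 (by simp)).mono_left nhdsWithin_le_nhds
  set A := 3 * (κ + 1 + L + L)
  obtain ⟨δ, hlayers, hδs₀, hδm, hδ : 0 < δ⟩ := (hlayers.and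
    ((hsq.eventually_le_const (by positivity : 0 < 8 * s₀)).and
      ((hsq.eventually_le_const (by positivity : 0 < m / (2 * A))).and
        self_mem_nhdsWithin))).exists
  set s := δ ^ 2 / 8 with hs_def
  have hs : 0 < s := by positivity
  refine ⟨κ + 1 + L, s, A / s ^ (k + 3) * (M * M) ^ (k + 3), by positivity, hs, by positivity,
    fun e he => ⟨_, hΘ.isDirectionBarrier he hδ (by positivity) hs.le fun x hx => ?_⟩⟩
  refine extremalGE_directionBarrier hδ hκ (by positivity) hs.le hs_def ?_
    (div_mul_cancel₀ A (by positivity)).ge (hpow e he x hx s ⟨hs.le, by linarith⟩)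
    (hlayers e he x hx)
  rw [le_div_iff₀ (by positivity)] at hδm ⊢
  linarith

end IsRadialDefiningFunction

end DirectionBarriers

section NearbyDirections

lemma eventually_forall_lt_of_isCompact_of_isClosed {X Y : Type*} [TopologicalSpace X]
    [TopologicalSpace Y] {S : Set X} {K : Set Y} {Z : Set (X × Y)} {f : X × Y → ℝ} {a : X} {c : ℝ}
    (hK : IsCompact K) (hZ : IsClosed Z) (hf : ContinuousOn f (S ×ˢ K)) (ha : a ∈ S)
    (h : ∀ y ∈ K, (a, y) ∈ Z → c < f (a, y)) :
    ∀ᶠ x in 𝓝[S] a, ∀ y ∈ K, (x, y) ∈ Z → c < f (x, y) := by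
  rw [eventually_nhdsWithin_iff]
  suffices hP : ∀ᶠ x in 𝓝 a, ∀ y ∈ K, x ∈ S → y ∈ K → (x, y) ∈ Z → c < f (x, y) by
    filter_upwards [hP] with x hx hxS y hy using hx y hy hxS hy
  refine hK.eventually_forall_of_forall_eventually fun y hy => ?_
  by_cases hmem : (a, y) ∈ Z
  · have hlt := (hf (a, y) ⟨ha, hy⟩).eventually_const_lt (h y hy hmem)
    rw [eventually_nhdsWithin_iff] at hlt
    filter_upwards [hlt] with z hz hzS hzK _ using hz ⟨hzS, hzK⟩
  · filter_upwards [hZ.isOpen_compl.mem_nhds hmem] with z hz _ _ hzZ using absurd hzZ hz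

variable {B : Set (EuclideanSpace ℝ (Fin N))} {Θ τ : EuclideanSpace ℝ (Fin N) → ℝ}
  {Q : EuclideanSpace ℝ (Fin N) →
    EuclideanSpace ℝ (Fin N) →L[ℝ] EuclideanSpace ℝ (Fin N) →L[ℝ] ℝ}
  {u : EuclideanSpace ℝ (Fin N) → ℝ → ℝ} {c M α : ℝ} {L : ℝ≥0} {e x : EuclideanSpace ℝ (Fin N)}

lemma mem_omegaReflSet_of_decay (hB : IsRadialDomain B) (he : ‖e‖ = 1) {C κ : ℝ} (hκ : 0 < κ)
    (hdecay : ∀ x ∈ halfDom B e, ∀ t, 1 ≤ t →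
      -(C * Real.exp (-κ * (t - 1))) ≤ reflDiff u e x t) :
    e ∈ omegaReflSet B u := by
  refine ⟨he, ?_⟩
  rintro z ⟨-, t, ht, hz⟩ x hx
  have hlim : ∀ y ∈ closure B, Tendsto (fun n => u y (t n)) atTop (𝓝 (z y)) := fun y hy => by
    refine Metric.nhds_basis_closedBall.tendsto_right_iff.2 fun ε hε => ?_
    obtain ⟨n₀, hn₀⟩ := hz ε hε
    filter_upwards [eventually_ge_atTop n₀] with n hn using hn₀ n hn y hy
  have hdiff : Tendsto (fun n => reflDiff u e x (t n)) atTop (𝓝 (z x - z (reflHyp e x))) :=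
    (hlim x (subset_closure hx.1)).sub (hlim _ (subset_closure (hB.reflHyp_mem he hx.1)))
  have hexp : Tendsto (fun n => -(C * Real.exp (-κ * (t n - 1)))) atTop (𝓝 (-(C * 0))) :=
    ((Real.tendsto_exp_atBot.comp ((tendsto_atTop_add_const_right _ (-1)
      ht).const_mul_atTop_of_neg (neg_lt_zero.2 hκ))).const_mul C).neg
  rw [mul_zero, neg_zero] at hexp
  refine sub_nonneg.1 (le_of_tendsto_of_tendsto hexp hdiff ?_)
  filter_upwards [ht.eventually_ge_atTop 1] with n hn using hdecay x hx _ hn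

lemma IsRadialDefiningFunction.inner_mul_eq_zero (hΘ : IsRadialDefiningFunction B Θ τ Q c M)
    (hB : IsRadialDomain B) (hx : x ∈ closedHalfDom B e \ halfDom B e) : ⟪x, e⟫ * Θ x = 0 := by
  rcases hB.mem_frontier_or_inner_eq_zero hx with hfr | hperp
  · rw [hB.isOpen.frontier_eq] at hfr
    have hΘx : Θ x ≤ 0 := not_lt.1 fun h => hfr.2 ((hΘ.mem_iff x).2 h)
    rw [le_antisymm hΘx (hΘ.nonneg hfr.1), mul_zero]
  · rw [hperp, zero_mul]

namespace HasReflSupersolutions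

lemma neg_exp_le_reflDiff (hu : HasReflSupersolutions B u α L) (hB : IsRadialDomain B)
    (hα : 0 ≤ α) (he : ‖e‖ = 1) (hΘ : IsRadialDefiningFunction B Θ τ Q c M) {κ s C : ℝ}
    {Ψ : EuclideanSpace ℝ (Fin N) → ℝ} (hΨ : IsDirectionBarrier B Θ α L κ s C e Ψ) (hs : 0 ≤ s)
    {ε : ℝ} (hε : 0 ≤ ε) (hge : ∀ x ∈ closedHalfDom B e, -ε ≤ reflDiff u e x 1)
    (hge' : ∀ x ∈ closedHalfDom B e, s ≤ ⟪x, e⟫ * Θ x → ε * C ≤ reflDiff u e x 1)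
    (hx : x ∈ halfDom B e) {t : ℝ} (ht : 1 ≤ t) :
    -(3 * ε * Real.exp (-κ * (t - 1))) ≤ reflDiff u e x t := by
  set ψ : EuclideanSpace ℝ (Fin N) → ℝ → ℝ := fun y r => ε * Real.exp (-κ * (r - 1)) * Ψ y
  have hψ : Continuous fun z : EuclideanSpace ℝ (Fin N) × ℝ => ψ z.1 z.2 := by
    have := hΨ.continuous
    fun_prop
  have hinit : ∀ y ∈ closedHalfDom B e, ψ y 1 ≤ reflDiff u e y 1 := fun y hy => by
    simp only [ψ, sub_self, mul_zero, Real.exp_zero, mul_one]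
    rcases le_total s (⟪y, e⟫ * Θ y) with hys | hys
    · exact (mul_le_mul_of_nonneg_left (hΨ.le y hy) hε).trans (hge' y hy hys)
    · linarith [mul_le_mul_of_nonneg_left (hΨ.le_of_layer y hy hys) hε, hge y hy]
  have hbdry : ∀ y ∈ closedHalfDom B e \ halfDom B e, ∀ r ∈ Ioc 1 t,
      ψ y r ≤ reflDiff u e y r := fun y hy r hr => by
    rw [hu.reflDiff_eq_zero hB he hy (zero_lt_one.trans hr.1)]
    have hlayer := hΨ.le_of_layer y hy.1 ((hΘ.inner_mul_eq_zero hB hy).trans_le hs)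
    exact mul_nonpos_of_nonneg_of_nonpos (by positivity) (by linarith)
  have hcomparison := comparison hα (hB.isCompact_closedHalfDom e) (hB.isOpen_halfDom e)
    (halfDom_subset_closedHalfDom B e)
    ((hu.continuousOn_reflDiff_right hB he).mono
      (prod_mono subset_rfl fun r hr => zero_le_one.trans hr.1))
    hψ.continuousOn hinit hbdry
    (fun y hy r hr => hu.isSupersolutionAt e he y hy.1 r (zero_lt_one.trans hr.1))
    (fun y hy r _ => isSubsolutionAt_exp_mul (φ := fun y _ => Ψ y) hε (hasDerivAt_const r (Ψ y))
      (by simpa using hΨ.extremalGE y (halfDom_subset_closedHalfDom B e hy)))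
    x (halfDom_subset_closedHalfDom B e hx) t ⟨ht, le_rfl⟩
  refine le_trans ?_ hcomparison
  have hcoef : 0 ≤ ε * Real.exp (-κ * (t - 1)) := by positivity
  linarith [mul_le_mul_of_nonneg_left (hΨ.ge x) hcoef]

lemma eventually_forall_lt_reflDiff (hu : HasReflSupersolutions B u α L) (hB : IsRadialDomain B)
    (he : ‖e‖ = 1) {Z : Set (EuclideanSpace ℝ (Fin N) × EuclideanSpace ℝ (Fin N))}
    (hZ : IsClosed Z) {t a : ℝ} (ht : 0 ≤ t)
    (h : ∀ x ∈ closure B, (e, x) ∈ Z → a < reflDiff u e x t) :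
    ∀ᶠ e' in 𝓝[{e' | ‖e'‖ = 1}] e, ∀ x ∈ closure B, (e', x) ∈ Z → a < reflDiff u e' x t :=
  eventually_forall_lt_of_isCompact_of_isClosed (f := fun z => reflDiff u z.1 z.2 t)
    hB.isCompact_closure hZ
    ((continuousOn_reflDiff hB hu.continuousOn).comp
      (f := fun z : EuclideanSpace ℝ (Fin N) × EuclideanSpace ℝ (Fin N) => (z.1, z.2, t))
      (by fun_prop) fun z hz => ⟨hz.1, hz.2, ht⟩) he h

lemma exists_pos_forall_lt_reflDiff (hu : HasReflSupersolutions B u α L) (hB : IsRadialDomain B)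
    (hΘ : IsRadialDefiningFunction B Θ τ Q c M) (he : ‖e‖ = 1) {s t : ℝ} (hs : 0 < s)
    (ht : 0 ≤ t) (hpos : ∀ x ∈ halfDom B e, 0 < reflDiff u e x t) :
    ∃ η, 0 < η ∧ ∀ x ∈ closedHalfDom B e, s ≤ ⟪x, e⟫ * Θ x → η < reflDiff u e x t := by
  have hΘc := hΘ.continuous
  have hcompact : IsCompact (closedHalfDom B e ∩ {x | s ≤ ⟪x, e⟫ * Θ x}) :=
    (hB.isCompact_closedHalfDom e).inter_right (isClosed_le continuous_const (by fun_prop))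
  have hcont : ContinuousOn (fun x => reflDiff u e x t)
      (closedHalfDom B e ∩ {x | s ≤ ⟪x, e⟫ * Θ x}) :=
    (hu.continuousOn_reflDiff_right hB he).comp (f := fun x => (x, t)) (by fun_prop)
      fun x hx => ⟨hx.1, ht⟩
  obtain ⟨η, hη, hηle⟩ := hcompact.exists_forall_le' hcont (a := 0) fun x ⟨hx, hxs⟩ => by
    by_contra hle
    have hxD : x ∉ halfDom B e := fun h => hle (hpos x h)
    exact (hs.trans_le hxs).ne' (hΘ.inner_mul_eq_zero hB ⟨hx, hxD⟩)
  exact ⟨η / 2, half_pos hη, fun x hx hxs => (half_lt_self hη).trans_le (hηle x ⟨hx, hxs⟩)⟩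

theorem omegaReflSet_mem_nhdsWithin (hu : HasReflSupersolutions B u α L) (hB : IsRadialDomain B)
    (hα : 0 < α) (he : ‖e‖ = 1) (hinit : ∀ x ∈ halfDom B e, 0 ≤ reflDiff u e x 0)
    (hinit' : ∃ x ∈ halfDom B e, 0 < reflDiff u e x 0) :
    omegaReflSet B u ∈ 𝓝[{e' | ‖e'‖ = 1}] e := by
  obtain ⟨Θ, τ, Q, c, M, hΘ⟩ := hB.exists_isRadialDefiningFunction
  obtain ⟨κ, s, C, hκ, hs, hC, hbarrier⟩ := hΘ.exists_isDirectionBarrier hα L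
  obtain ⟨η, hη, hηlt⟩ := hu.exists_pos_forall_lt_reflDiff hB hΘ he hs zero_le_one
    fun x hx => hu.reflDiff_pos hB hα he hinit hinit' hx one_pos
  have hinner : Continuous fun z : EuclideanSpace ℝ (Fin N) × EuclideanSpace ℝ (Fin N) =>
      ⟪z.2, z.1⟫ := by fun_prop
  have hclosed : IsClosed
      {z : EuclideanSpace ℝ (Fin N) × EuclideanSpace ℝ (Fin N) | 0 ≤ ⟪z.2, z.1⟫} :=
    isClosed_le continuous_const hinner
  have hnear : ∀ᶠ e' in 𝓝[{e' | ‖e'‖ = 1}] e, ∀ x ∈ closure B, 0 ≤ ⟪x, e'⟫ →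
      -(η / C) < reflDiff u e' x 1 :=
    hu.eventually_forall_lt_reflDiff hB he hclosed zero_le_one fun x hx hxe =>
      (neg_lt_zero.2 (div_pos hη hC)).trans_le
        (hu.reflDiff_nonneg hB hα.le he hinit ⟨hx, hxe⟩ zero_le_one)
  have hnear' : ∀ᶠ e' in 𝓝[{e' | ‖e'‖ = 1}] e, ∀ x ∈ closure B,
      0 ≤ ⟪x, e'⟫ ∧ s ≤ ⟪x, e'⟫ * Θ x → η < reflDiff u e' x 1 :=
    hu.eventually_forall_lt_reflDiff hB he
      (hclosed.inter (isClosed_le continuous_const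
        (hinner.mul (hΘ.continuous.comp continuous_snd)))) zero_le_one
      fun x hx hxe => hηlt x ⟨hx, hxe.1⟩ hxe.2
  filter_upwards [hnear, hnear', self_mem_nhdsWithin] with e' hge hge' he'
  obtain ⟨Ψ, hΨ⟩ := hbarrier e' he'
  refine mem_omegaReflSet_of_decay hB he' hκ fun x hx t ht =>
    hu.neg_exp_le_reflDiff hB hα.le he' hΘ hΨ hs.le (div_pos hη hC).le
      (fun y hy => (hge y hy.1 hy.2).le) (fun y hy hys => ?_) hx ht
  rw [div_mul_cancel₀ η hC.ne']
  exact (hge' y hy.1 ⟨hy.2, hys⟩).le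

end HasReflSupersolutions

end NearbyDirections

theorem omegaReflSet_is_nbhd_of_initial_reflection_direction_general
    {B : Set (EuclideanSpace ℝ (Fin N))} (hB : IsRadialDomain B)
    {𝓑 : Set (ℝ × EuclideanSpace ℝ (Fin N) × (Fin N → Fin N → ℝ))}
    (h𝓑open : IsOpen 𝓑) (h𝓑conv : Convex ℝ 𝓑)
    {F : ℝ → EuclideanSpace ℝ (Fin N) →
      (ℝ × EuclideanSpace ℝ (Fin N) × (Fin N → Fin N → ℝ)) → ℝ}
    (hF1dom : ∀ e : EuclideanSpace ℝ (Fin N), ‖e‖ = 1 → ∀ v p q, (v, p, q) ∈ 𝓑 →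
      (v, reflHyp e p, matConj (reflMat e) q) ∈ 𝓑)
    (hF1sym : ∀ e : EuclideanSpace ℝ (Fin N), ‖e‖ = 1 → ∀ t ∈ Ioi (0 : ℝ), ∀ x ∈ B,
      ∀ v p q, (v, p, q) ∈ 𝓑 →
      F t (reflHyp e x) (v, reflHyp e p, matConj (reflMat e) q) = F t x (v, p, q))
    {L : ℝ≥0} (hF_lip : ∀ t ∈ Ici (0 : ℝ), ∀ x ∈ B, LipschitzOnWith L (F t x) 𝓑)
    {Fq : ℝ → EuclideanSpace ℝ (Fin N) →
      (ℝ × EuclideanSpace ℝ (Fin N) × (Fin N → Fin N → ℝ)) → ((Fin N → Fin N → ℝ) →L[ℝ] ℝ)}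
    (hFq : ∀ t ∈ Ici (0 : ℝ), ∀ x ∈ B, ∀ v p q, (v, p, q) ∈ 𝓑 →
      HasFDerivAt (fun q' => F t x (v, p, q')) (Fq t x (v, p, q)) q)
    {α₀ : ℝ} (hα₀ : 0 < α₀)
    (hF4 : ∀ t ∈ Ici (0 : ℝ), ∀ x ∈ B, ∀ P ∈ 𝓑, ∀ ξ : Fin N → ℝ,
      α₀ * (∑ i, ξ i ^ 2) ≤ Fq t x P (fun i j => ξ i * ξ j))
    {u : EuclideanSpace ℝ (Fin N) → ℝ → ℝ} {u₀ : EuclideanSpace ℝ (Fin N) → ℝ}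
    {Du : EuclideanSpace ℝ (Fin N) → ℝ → (EuclideanSpace ℝ (Fin N) →L[ℝ] ℝ)}
    {D2u : EuclideanSpace ℝ (Fin N) → ℝ →
      (EuclideanSpace ℝ (Fin N) →L[ℝ] EuclideanSpace ℝ (Fin N) →L[ℝ] ℝ)}
    (hu_cont : ContinuousOn (fun p : EuclideanSpace ℝ (Fin N) × ℝ => u p.1 p.2)
      (closure B ×ˢ Ici 0))
    (hDu : ∀ x ∈ B, ∀ t ∈ Ioi (0 : ℝ), HasFDerivAt (fun y => u y t) (Du x t) x)
    (hD2u : ∀ x ∈ B, ∀ t ∈ Ioi (0 : ℝ), HasFDerivAt (fun y => Du y t) (D2u x t) x)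
    (hdom : ∀ x ∈ B, ∀ t ∈ Ioi (0 : ℝ), (u x t, gradVec (Du x t), hessMat (D2u x t)) ∈ 𝓑)
    (hPDE : ∀ x ∈ B, ∀ t ∈ Ioi (0 : ℝ),
      HasDerivAt (u x) (F t x (u x t, gradVec (Du x t), hessMat (D2u x t))) t)
    (hbc : ∀ x ∈ frontier B, ∀ t ∈ Ioi (0 : ℝ), u x t = 0)
    (hinit : ∀ x ∈ closure B, u x 0 = u₀ x)
    {e : EuclideanSpace ℝ (Fin N)} (he : ‖e‖ = 1)
    (hU1a : ∀ x ∈ halfDom B e, u₀ (reflHyp e x) ≤ u₀ x)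
    (hU1b : ∃ x ∈ halfDom B e, u₀ (reflHyp e x) ≠ u₀ x) :
    ∃ ε > (0 : ℝ), ∀ e' : EuclideanSpace ℝ (Fin N), ‖e'‖ = 1 → ‖e' - e‖ < ε →
      e' ∈ omegaReflSet B u := by
  have hell (t) (ht : 0 < t) (x) (hx : x ∈ B) : IsEllipticNonlinearity 𝓑 (F t x) (Fq t x) α₀ L :=
    ⟨h𝓑open, h𝓑conv, hF_lip t ht.le x hx, hFq t ht.le x hx, hF4 t ht.le x hx⟩
  have hjet (t) (ht : 0 < t) (x) (hx : x ∈ B) :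
      HasTwoJetAt (fun y => u y t) (Du x t) (D2u x t) x :=
    ⟨fun y => Du y t, by filter_upwards [hB.isOpen.mem_nhds hx] with y hy using hDu y hy t ht,
      rfl, hD2u x hx t ht⟩
  have hu : HasReflSupersolutions B u α₀ L := ⟨hu_cont, hbc, fun e₁ he₁ x hx t ht => by
    have hx' := hB.reflHyp_mem he₁ hx
    have hsym := hF1sym e₁ he₁ t ht _ hx' _ _ _ (hdom _ hx' t ht)
    rw [reflHyp_reflHyp he₁] at hsym
    exact (hell t ht x hx).isSupersolutionAt_reflDiff he₁ (hjet t ht x hx) (hjet t ht _ hx')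
      (hdom x hx t ht) (hF1dom e₁ he₁ _ _ _ (hdom _ hx' t ht)) (hPDE x hx t ht)
      (hsym ▸ hPDE _ hx' t ht)⟩
  have hdiff (x) (hx : x ∈ halfDom B e) : reflDiff u e x 0 = u₀ x - u₀ (reflHyp e x) := by
    rw [reflDiff, hinit x (subset_closure hx.1),
      hinit _ (subset_closure (hB.reflHyp_mem he hx.1))]
  obtain ⟨x₀, hx₀, hne⟩ := hU1b
  obtain ⟨ε, hε, hball⟩ := Metric.mem_nhdsWithin_iff.1 <|
    hu.omegaReflSet_mem_nhdsWithin hB hα₀ he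
      (fun x hx => (hdiff x hx).ge.trans' (sub_nonneg.2 (hU1a x hx)))
      ⟨x₀, hx₀, (hdiff x₀ hx₀).ge.trans_lt' (sub_pos.2 ((hU1a x₀ hx₀).lt_of_ne hne))⟩
  exact ⟨ε, hε, fun e' he' hlt => hball ⟨by rwa [mem_ball, dist_eq_norm], he'⟩⟩

/-- Lemma `teopohob` of the paper:
under hypotheses (F1)–(F4) and (U2), if `e ∈ S` satisfies the reflection
inequality (U1) for the initial profile `u₀`, then all unit vectors `e'` close
enough to `e` belong to the set
`𝓜 = {e ∈ S : z ≥ z ∘ σ_e on B(e) for all z ∈ ω(u)}`. -/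
theorem omegaReflSet_is_nbhd_of_initial_reflection_direction
    (N : ℕ) (hN : 2 ≤ N)
    (B : Set (EuclideanSpace ℝ (Fin N))) (hB : IsRadialDomain B)
    (𝓑 : Set (ℝ × EuclideanSpace ℝ (Fin N) × (Fin N → Fin N → ℝ)))
    (h𝓑open : IsOpen 𝓑) (h𝓑conv : Convex ℝ 𝓑)
    (h𝓑zero : ((0:ℝ), (0 : EuclideanSpace ℝ (Fin N)), (0 : Fin N → Fin N → ℝ)) ∈ 𝓑)
    (F : ℝ → EuclideanSpace ℝ (Fin N) →
      (ℝ × EuclideanSpace ℝ (Fin N) × (Fin N → Fin N → ℝ)) → ℝ)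
    -- (F1) reflection invariance
    (hF1dom : ∀ e : EuclideanSpace ℝ (Fin N), ‖e‖ = 1 → ∀ x ∈ B,
      ∀ v : ℝ, ∀ p : EuclideanSpace ℝ (Fin N), ∀ q : Fin N → Fin N → ℝ,
      (v, p, q) ∈ 𝓑 →
      reflHyp e x ∈ B ∧ (v, reflHyp e p, matConj (reflMat e) q) ∈ 𝓑)
    (hF1sym : ∀ e : EuclideanSpace ℝ (Fin N), ‖e‖ = 1 → ∀ t ∈ Ioi (0:ℝ), ∀ x ∈ B,
      ∀ v : ℝ, ∀ p : EuclideanSpace ℝ (Fin N), ∀ q : Fin N → Fin N → ℝ,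
      (v, p, q) ∈ 𝓑 →
      F t (reflHyp e x) (v, reflHyp e p, matConj (reflMat e) q) = F t x (v, p, q))
    -- (F2) regularity: continuity, uniform Lipschitz continuity in (u,p,q),
    -- differentiability with respect to the matrix variable q
    (hF_cont : ContinuousOn (fun z : ℝ × EuclideanSpace ℝ (Fin N) ×
        (ℝ × EuclideanSpace ℝ (Fin N) × (Fin N → Fin N → ℝ)) => F z.1 z.2.1 z.2.2)
      (Ici 0 ×ˢ closure B ×ˢ 𝓑))
    (hF_lip : ∃ L > (0:ℝ), ∀ t ∈ Ici (0:ℝ), ∀ x ∈ B, ∀ P ∈ 𝓑, ∀ P' ∈ 𝓑,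
      |F t x P - F t x P'| ≤ L * ‖P - P'‖)
    (Fq : ℝ → EuclideanSpace ℝ (Fin N) →
      (ℝ × EuclideanSpace ℝ (Fin N) × (Fin N → Fin N → ℝ)) →
      ((Fin N → Fin N → ℝ) →L[ℝ] ℝ))
    (hFq : ∀ t ∈ Ici (0:ℝ), ∀ x ∈ B,
      ∀ v : ℝ, ∀ p : EuclideanSpace ℝ (Fin N), ∀ q : Fin N → Fin N → ℝ,
      (v, p, q) ∈ 𝓑 →
      HasFDerivAt (fun q' => F t x (v, p, q')) (Fq t x (v, p, q)) q)
    -- (F3) boundedness of F(·,·,0,0,0)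
    (hF3 : ∃ C : ℝ, ∀ t ∈ Ici (0:ℝ), ∀ x ∈ B,
      |F t x ((0:ℝ), (0 : EuclideanSpace ℝ (Fin N)), (0 : Fin N → Fin N → ℝ))| ≤ C)
    -- (F4) uniform ellipticity: ∂_{q_ij}F ξᵢξⱼ ≥ α₀ |ξ|²
    (α₀ : ℝ) (hα₀ : 0 < α₀)
    (hF4 : ∀ t ∈ Ici (0:ℝ), ∀ x ∈ B, ∀ P ∈ 𝓑, ∀ ξ : Fin N → ℝ,
      α₀ * (∑ i, ξ i ^ 2) ≤ Fq t x P (fun i j => ξ i * ξ j))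
    -- the solution and its derivatives
    (u : EuclideanSpace ℝ (Fin N) → ℝ → ℝ)
    (u₀ : EuclideanSpace ℝ (Fin N) → ℝ)
    (ut : EuclideanSpace ℝ (Fin N) → ℝ → ℝ)
    (Du : EuclideanSpace ℝ (Fin N) → ℝ → (EuclideanSpace ℝ (Fin N) →L[ℝ] ℝ))
    (D2u : EuclideanSpace ℝ (Fin N) → ℝ →
      (EuclideanSpace ℝ (Fin N) →L[ℝ] EuclideanSpace ℝ (Fin N) →L[ℝ] ℝ))
    -- u ∈ C(B̄ × [0,∞))
    (hu_cont : ContinuousOn (fun p : EuclideanSpace ℝ (Fin N) × ℝ => u p.1 p.2)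
      (closure B ×ˢ Ici 0))
    -- u ∈ C^{2,1}(B × (0,∞)): the derivatives exist and are continuous there
    (hut : ∀ x ∈ B, ∀ t ∈ Ioi (0:ℝ), HasDerivAt (fun s => u x s) (ut x t) t)
    (hDu : ∀ x ∈ B, ∀ t ∈ Ioi (0:ℝ), HasFDerivAt (fun y => u y t) (Du x t) x)
    (hD2u : ∀ x ∈ B, ∀ t ∈ Ioi (0:ℝ), HasFDerivAt (fun y => Du y t) (D2u x t) x)
    (hreg : ContinuousOn (fun p : EuclideanSpace ℝ (Fin N) × ℝ =>
      (ut p.1 p.2, Du p.1 p.2, D2u p.1 p.2)) (B ×ˢ Ioi 0))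
    -- the equation u_t = F(t,x,u,∇u,D²u) in B × (0,∞), with values in 𝓑
    (hdom : ∀ x ∈ B, ∀ t ∈ Ioi (0:ℝ),
      (u x t, gradVec (Du x t), hessMat (D2u x t)) ∈ 𝓑)
    (hPDE : ∀ x ∈ B, ∀ t ∈ Ioi (0:ℝ),
      ut x t = F t x (u x t, gradVec (Du x t), hessMat (D2u x t)))
    -- the boundary condition u = 0 on ∂B × (0,∞)
    (hbc : ∀ x ∈ frontier B, ∀ t ∈ Ioi (0:ℝ), u x t = 0)
    -- the initial condition u(·,0) = u₀
    (hinit : ∀ x ∈ closure B, u x 0 = u₀ x)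
    -- (U2): uniform boundedness
    (hU2 : ∃ C : ℝ, ∀ t ∈ Ici (0:ℝ), ∀ x ∈ closure B, |u x t| ≤ C)
    -- the direction e of the reflection inequality (U1)
    (e : EuclideanSpace ℝ (Fin N)) (he : ‖e‖ = 1)
    (hU1a : ∀ x ∈ halfDom B e, u₀ (reflHyp e x) ≤ u₀ x)
    (hU1b : ∃ x ∈ halfDom B e, u₀ (reflHyp e x) ≠ u₀ x) :
    ∃ ε > (0:ℝ), ∀ e' : EuclideanSpace ℝ (Fin N), ‖e'‖ = 1 → ‖e' - e‖ < ε →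
      e' ∈ omegaReflSet B u := by
  obtain ⟨L, -, hlip⟩ := hF_lip
  exact omegaReflSet_is_nbhd_of_initial_reflection_direction_general hB h𝓑open h𝓑conv
    (fun e he v p q hP => (hF1dom e he _ hU1b.choose_spec.1.1 v p q hP).2) hF1sym
    (fun t ht x hx => .of_dist_le' <| by
      simpa only [dist_eq_norm, Real.norm_eq_abs] using hlip t ht x hx)
    hFq hα₀ hF4 hu_cont hDu hD2u hdom (fun x hx t ht => hPDE x hx t ht ▸ hut x hx t ht)
    hbc hinit he hU1a hU1b

end
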